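/- Let n ≥ 1, let 1 < q₁ < q₂, let u₁, u₂ > 0 and suppose r := u₁q₁ − u₂q₂ > 0. Then for every measurable function f : ℝ^n → ℝ with 0 < a ≤ f ≤ b for some constants a, b, and every x ∈ ℝ^n, ( P_{u₂}( (P_r f)^{q₂} )(x) )^{1/q₂} ≤ ( P_{u₁}( f^{q₁} )(x) )^{1/q₁} · M^{n/2}, where M = ((q₁−1)/u₂)^{1−1/q₁} · ((q₂−1)/u₁)^{1/q₂−1} · ( (u₁q₁−u₂q₂)/(q₂−q₁) )^{1/q₂−1/q₁} (dimensional local hypercontractivity of the heat semigroup, i.e. the CD(0,n) hypercontractivity theorem applied to the Laplacian on ℝ^n). -/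

import Mathlib

open MeasureTheory Real

/-- Euclidean heat semigroup, with `heat n 0 f = f`. -/
noncomputable def heat (n : ℕ) (t : ℝ) (f : EuclideanSpace ℝ (Fin n) → ℝ)
    (x : EuclideanSpace ℝ (Fin n)) : ℝ :=
  if t = 0 then f x
  else (4 * π * t) ^ (-(n : ℝ) / 2) * ∫ y, f y * Real.exp (-‖x - y‖ ^ 2 / (4 * t))

set_option linter.unusedSectionVars false

/-- Third-order upper Taylor bound for `s ↦ (1 + s) ^ θ`. -/
lemma one_add_rpow_le_taylor {θ s : ℝ} (h0 : 0 ≤ θ) (h1 : θ ≤ 1) (hs : -1 < s) :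
    (1 + s) ^ θ ≤ 1 + θ * s - θ * (1 - θ) / 2 * s ^ 2 + |s| ^ 3 := by
  let κ : ℝ := θ * (1 - θ) * (2 - θ) / 6
  let g : ℝ → ℝ := fun x ↦ 1 + θ * x - θ * (1 - θ) / 2 * x ^ 2 + κ * x ^ 3 - (1 + x) ^ θ
  let g' : ℝ → ℝ := fun x ↦ θ - θ * (1 - θ) * x + 3 * κ * x ^ 2 - θ * (1 + x) ^ (θ - 1)
  let g'' : ℝ → ℝ := fun x ↦
    -(θ * (1 - θ)) + 6 * κ * x - θ * ((θ - 1) * (1 + x) ^ (θ - 1 - 1))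
  have hlin : ∀ x : ℝ, HasDerivAt (fun y : ℝ ↦ 1 + y) 1 x := fun x ↦ by
    simpa using (hasDerivAt_id x).const_add 1
  have hpow : ∀ (p x : ℝ), -1 < x →
      HasDerivAt (fun y : ℝ ↦ (1 + y) ^ p) (p * (1 + x) ^ (p - 1)) x := fun p x hx ↦ by
    have := (hlin x).rpow_const (p := p) (Or.inl (by linarith))
    simpa using this
  have hg : ∀ x, -1 < x → HasDerivAt g (g' x) x := fun x hx ↦ by
    have h := (((((hasDerivAt_id x).const_mul θ).const_add 1).sub
      ((hasDerivAt_pow 2 x).const_mul (θ * (1 - θ) / 2))).add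
      ((hasDerivAt_pow 3 x).const_mul κ)).sub (hpow θ x hx)
    refine h.congr_deriv ?_
    simp only [g']; push_cast; ring
  have hg' : ∀ x, -1 < x → HasDerivAt g' (g'' x) x := fun x hx ↦ by
    have h := (((((hasDerivAt_id x).const_mul (θ * (1 - θ))).const_sub θ)).add
      ((hasDerivAt_pow 2 x).const_mul (3 * κ))).sub ((hpow (θ - 1) x hx).const_mul θ)
    refine h.congr_deriv ?_
    simp only [g'']; push_cast; ring
  have hg'' : ∀ x, -1 < x → 0 ≤ g'' x := fun x hx ↦ by
    have hb : 1 - (2 - θ) * x ≤ (1 + x) ^ (θ - 1 - 1) := by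
      rw [Real.rpow_def_of_pos (by linarith)]
      have hl : Real.log (1 + x) ≤ x := by
        have := Real.log_le_sub_one_of_pos (show 0 < 1 + x by linarith)
        linarith
      have he := Real.add_one_le_exp (Real.log (1 + x) * (θ - 1 - 1))
      nlinarith
    have : g'' x = θ * (1 - θ) * ((1 + x) ^ (θ - 1 - 1) - (1 - (2 - θ) * x)) := by
      simp only [g'', κ]; ring
    rw [this]
    exact mul_nonneg (mul_nonneg h0 (by linarith)) (by linarith)
  have hconv : ConvexOn ℝ (Set.Ioi (-1)) g := by
    refine convexOn_of_hasDerivWithinAt2_nonneg (f' := g') (f'' := g'') (convex_Ioi _)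
      (fun x hx ↦ (hg x hx).continuousAt.continuousWithinAt) ?_ ?_ ?_
    · intro x hx; rw [interior_Ioi] at hx ⊢; exact (hg x hx).hasDerivWithinAt
    · intro x hx; rw [interior_Ioi] at hx ⊢; exact (hg' x hx).hasDerivWithinAt
    · intro x hx; rw [interior_Ioi] at hx; exact hg'' x hx
  have hmin : IsMinOn g (Set.Ioi (-1)) 0 := by
    refine hconv.isMinOn_of_rightDeriv_eq_zero (by simp) ?_
    rw [((hg 0 (by norm_num)).hasDerivWithinAt).derivWithin (uniqueDiffWithinAt_Ioi 0)]
    simp [g']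
  have h := hmin (show s ∈ Set.Ioi (-1) from hs)
  have hκ : κ * s ^ 3 ≤ |s| ^ 3 := by
    have : κ ≤ 1 := by simp only [κ]; nlinarith [mul_nonneg h0 (sub_nonneg.2 h1)]
    have h0' : 0 ≤ κ := by
      simp only [κ]
      have := mul_nonneg (mul_nonneg h0 (sub_nonneg.2 h1)) (show 0 ≤ 2 - θ by linarith)
      linarith
    have h3 : s ^ 3 ≤ |s| ^ 3 := by rw [← abs_pow]; exact le_abs_self _
    have h4 : 0 ≤ |s| ^ 3 := by positivity
    nlinarith
  have h' : g 0 ≤ g s := h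
  simp only [g] at h'
  norm_num at h'
  linarith

lemma mul_taylor_le {α β θ φ R s t : ℝ} (hα : 0 ≤ α) (hα' : α ≤ 1) (hβ : 0 ≤ β) (hβ' : β ≤ 1)
    (hθ : 0 ≤ θ) (hθ' : θ ≤ 1) (hφ : 0 ≤ φ) (hφ' : φ ≤ 1) (hR : 1 ≤ R)
    (hs : |s| ≤ R) (ht : |t| ≤ R) :
    (1 + θ * s - α * s ^ 2 + |s| ^ 3) * (1 + φ * t - β * t ^ 2 + |t| ^ 3) ≤
      1 + θ * s + φ * t + (-(α * s ^ 2) - β * t ^ 2 + θ * φ * (s * t)) +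
        20 * R ^ 3 * (|s| ^ 3 + |t| ^ 3) := by
  have key : ∀ c : ℝ, |c| ≤ 1 → ∀ x : ℝ, c * x ≤ |x| := fun c hc x ↦ by
    calc c * x ≤ |c * x| := le_abs_self _
      _ = |c| * |x| := abs_mul _ _
      _ ≤ 1 * |x| := by gcongr
      _ = |x| := one_mul _
  have e1 := key (-(θ * β)) (by rw [abs_neg, abs_of_nonneg (by positivity)]; nlinarith) (s * t ^ 2)
  have e2 := key θ (by rwa [abs_of_nonneg hθ]) (s * |t| ^ 3)
  have e3 := key (-(α * φ)) (by rw [abs_neg, abs_of_nonneg (by positivity)]; nlinarith) (s ^ 2 * t)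
  have e4 := key (α * β) (by rw [abs_of_nonneg (by positivity)]; nlinarith) (s ^ 2 * t ^ 2)
  have e5 := key (-α) (by rwa [abs_neg, abs_of_nonneg hα]) (s ^ 2 * |t| ^ 3)
  have e6 := key φ (by rwa [abs_of_nonneg hφ]) (|s| ^ 3 * t)
  have e7 := key (-β) (by rwa [abs_neg, abs_of_nonneg hβ]) (|s| ^ 3 * t ^ 2)
  simp only [abs_mul, abs_pow, abs_abs] at e1 e2 e3 e4 e5 e6 e7
  have hexp : (1 + θ * s - α * s ^ 2 + |s| ^ 3) * (1 + φ * t - β * t ^ 2 + |t| ^ 3) =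
      1 + θ * s + φ * t + (-(α * s ^ 2) - β * t ^ 2 + θ * φ * (s * t)) + (|s| ^ 3 + |t| ^ 3)
      + (-(θ * β) * (s * t ^ 2)) + θ * (s * |t| ^ 3) + (-(α * φ)) * (s ^ 2 * t)
      + (α * β) * (s ^ 2 * t ^ 2) + (-α) * (s ^ 2 * |t| ^ 3) + φ * (|s| ^ 3 * t)
      + (-β) * (|s| ^ 3 * t ^ 2) + |s| ^ 3 * |t| ^ 3 := by ring
  rw [hexp]
  have hS := abs_nonneg s
  have hT := abs_nonneg t
  generalize |s| = S at *
  generalize |t| = T at *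
  have a1 : S * T ^ 2 ≤ S ^ 3 + T ^ 3 := by
    nlinarith [mul_nonneg (add_nonneg hS hT) (sq_nonneg (S - T)), mul_nonneg hS (sq_nonneg S),
      mul_nonneg hT (sq_nonneg T), mul_nonneg hT (sq_nonneg S), mul_nonneg hS (sq_nonneg T)]
  have a2 : S ^ 2 * T ≤ S ^ 3 + T ^ 3 := by
    nlinarith [mul_nonneg (add_nonneg hS hT) (sq_nonneg (S - T)), mul_nonneg hS (sq_nonneg S),
      mul_nonneg hT (sq_nonneg T), mul_nonneg hT (sq_nonneg S), mul_nonneg hS (sq_nonneg T)]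
  have hR2 : R ≤ R ^ 3 := le_self_pow₀ hR (by norm_num)
  have hR3 : R ^ 2 ≤ R ^ 3 := pow_le_pow_right₀ hR (by norm_num)
  have hR0 : 1 ≤ R ^ 3 := one_le_pow₀ hR
  have hT2 : T ^ 2 ≤ R ^ 2 := by gcongr
  have hT3 : T ^ 3 ≤ R ^ 3 := by gcongr
  have hsum : 0 ≤ S ^ 3 + T ^ 3 := by positivity
  have hS3 : 0 ≤ S ^ 3 := by positivity
  have hT3' : 0 ≤ T ^ 3 := by positivity
  have b2 : S * T ^ 3 ≤ R ^ 3 * (S ^ 3 + T ^ 3) := by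
    calc S * T ^ 3 ≤ R ^ 3 * T ^ 3 := by gcongr; linarith
      _ ≤ _ := by gcongr; linarith
  have b4 : S ^ 2 * T ^ 2 ≤ R ^ 3 * (S ^ 3 + T ^ 3) := by
    calc S ^ 2 * T ^ 2 = T * (S ^ 2 * T) := by ring
      _ ≤ R ^ 3 * (S ^ 3 + T ^ 3) := by gcongr; linarith
  have b5 : S ^ 2 * T ^ 3 ≤ R ^ 3 * (S ^ 3 + T ^ 3) := by
    calc S ^ 2 * T ^ 3 = T ^ 2 * (S ^ 2 * T) := by ring
      _ ≤ R ^ 3 * (S ^ 3 + T ^ 3) := by gcongr; linarith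
  have b6 : S ^ 3 * T ≤ R ^ 3 * (S ^ 3 + T ^ 3) := by
    calc S ^ 3 * T ≤ S ^ 3 * R ^ 3 := by gcongr; linarith
      _ ≤ _ := by rw [mul_comm]; gcongr; linarith
  have b7 : S ^ 3 * T ^ 2 ≤ R ^ 3 * (S ^ 3 + T ^ 3) := by
    calc S ^ 3 * T ^ 2 ≤ S ^ 3 * R ^ 3 := by gcongr; linarith
      _ ≤ _ := by rw [mul_comm]; gcongr; linarith
  have b8 : S ^ 3 * T ^ 3 ≤ R ^ 3 * (S ^ 3 + T ^ 3) := by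
    calc S ^ 3 * T ^ 3 ≤ S ^ 3 * R ^ 3 := by gcongr
      _ ≤ _ := by rw [mul_comm]; gcongr; linarith
  have b0 : S ^ 3 + T ^ 3 ≤ R ^ 3 * (S ^ 3 + T ^ 3) := le_mul_of_one_le_left hsum hR0
  nlinarith

/-- A quadratic perturbation estimate: each of the two linear coefficients moves by a small error. -/
lemma quadForm_perturb_le {α β η c K N l m e e' : ℝ} (hα : 0 ≤ α) (hα' : α ≤ 1) (hβ : 0 ≤ β)
    (hβ' : β ≤ 1) (hη : 0 ≤ η) (hη' : η ≤ 1) (hc : 0 ≤ c) (hc' : c ≤ 1) (hN : 1 ≤ N)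
    (hl : |l| ≤ K * N) (hm : |m| ≤ K * N) (he : |e| ≤ K * c ^ 2 * N ^ 2)
    (he' : |e'| ≤ K * c ^ 2 * N ^ 2) :
    -(α * (c * l + e) ^ 2) - β * (c * m + e') ^ 2 + η * ((c * l + e) * (c * m + e')) ≤
      c ^ 2 * (-(α * l ^ 2) - β * m ^ 2 + η * (l * m)) + 9 * K ^ 2 * (c ^ 3 * N ^ 6) := by
  have hK : 0 ≤ K := by
    by_contra h
    have := abs_nonneg l
    nlinarith
  have key : ∀ k x y : ℝ, ∀ A B : ℝ, |k| ≤ 1 → |x| ≤ A → |y| ≤ B → k * (x * y) ≤ A * B := by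
    intro k x y A B hk hx hy
    calc k * (x * y) ≤ |k * (x * y)| := le_abs_self _
      _ = |k| * (|x| * |y|) := by rw [abs_mul, abs_mul]
      _ ≤ 1 * (A * B) := by
        have := abs_nonneg x
        have := abs_nonneg y
        gcongr
        linarith
      _ = A * B := one_mul _
  have hα1 : |-α| ≤ 1 := by rwa [abs_neg, abs_of_nonneg hα]
  have hβ1 : |-β| ≤ 1 := by rwa [abs_neg, abs_of_nonneg hβ]
  have hη1 : |η| ≤ 1 := by rwa [abs_of_nonneg hη]
  have t1 := key _ l e _ _ hα1 hl he
  have t2 := key _ e e _ _ hα1 he he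
  have t3 := key _ m e' _ _ hβ1 hm he'
  have t4 := key _ e' e' _ _ hβ1 he' he'
  have t5 := key _ l e' _ _ hη1 hl he'
  have t6 := key _ e m _ _ hη1 he hm
  have t7 := key _ e e' _ _ hη1 he he'
  have u1 : K * N * (K * c ^ 2 * N ^ 2) * c ≤ K ^ 2 * (c ^ 3 * N ^ 6) := by
    have : N ^ 3 ≤ N ^ 6 := pow_le_pow_right₀ hN (by norm_num)
    calc K * N * (K * c ^ 2 * N ^ 2) * c = K ^ 2 * (c ^ 3 * N ^ 3) := by ring
      _ ≤ _ := by gcongr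
  have u2 : K * c ^ 2 * N ^ 2 * (K * c ^ 2 * N ^ 2) ≤ K ^ 2 * (c ^ 3 * N ^ 6) := by
    have h4 : N ^ 4 ≤ N ^ 6 := pow_le_pow_right₀ hN (by norm_num)
    have h5 : c ^ 4 ≤ c ^ 3 := pow_le_pow_of_le_one hc hc' (by norm_num)
    calc K * c ^ 2 * N ^ 2 * (K * c ^ 2 * N ^ 2) = K ^ 2 * (c ^ 4 * N ^ 4) := by ring
      _ ≤ _ := by gcongr
  have v1 := mul_le_mul_of_nonneg_right t1 hc
  have v3 := mul_le_mul_of_nonneg_right t3 hc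
  have v5 := mul_le_mul_of_nonneg_right t5 hc
  have v6 := mul_le_mul_of_nonneg_right t6 hc
  nlinarith

/-- Pointwise second-order expansion of `(1 + s) ^ θ * (1 + t) ^ φ`. -/
lemma rpow_mul_rpow_le_quadratic {θ φ c K R N s t l m : ℝ} (hθ : 0 ≤ θ) (hθ' : θ ≤ 1) (hφ : 0 ≤ φ)
    (hφ' : φ ≤ 1) (hc : 0 ≤ c) (hc' : c ≤ 1) (hN : 1 ≤ N) (hR : 1 ≤ R) (hs1 : -1 < s)
    (ht1 : -1 < t) (hs : |s| ≤ R) (ht : |t| ≤ R) (hl : |l| ≤ K * N) (hm : |m| ≤ K * N)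
    (he : |s - c * l| ≤ K * c ^ 2 * N ^ 2) (he' : |t - c * m| ≤ K * c ^ 2 * N ^ 2) :
    (1 + s) ^ θ * (1 + t) ^ φ ≤ 1 + θ * s + φ * t +
      c ^ 2 * (-(θ * (1 - θ) / 2 * l ^ 2) - φ * (1 - φ) / 2 * m ^ 2 + θ * φ * (l * m)) +
      (9 * K ^ 2 + 320 * R ^ 3 * K ^ 3) * (c ^ 3 * N ^ 6) := by
  have hK : 0 ≤ K := by
    by_contra h
    have := abs_nonneg l
    nlinarith
  have cube : ∀ x y : ℝ, |y| ≤ K * N → |x - c * y| ≤ K * c ^ 2 * N ^ 2 →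
      |x| ^ 3 ≤ 8 * K ^ 3 * (c ^ 3 * N ^ 6) := by
    intro x y hy hxy
    have h1 : |x| ≤ 2 * K * c * N ^ 2 := by
      calc |x| = |(x - c * y) + c * y| := by ring_nf
        _ ≤ |x - c * y| + |c * y| := abs_add_le _ _
        _ ≤ K * c ^ 2 * N ^ 2 + c * (K * N) := by
          rw [abs_mul, abs_of_nonneg hc]; gcongr
        _ ≤ K * c * N ^ 2 + c * (K * N ^ 2) := by
          have : N ≤ N ^ 2 := le_self_pow₀ hN (by norm_num)
          have : c ^ 2 ≤ c := pow_le_of_le_one hc hc' (by norm_num)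
          gcongr
        _ = _ := by ring
    calc |x| ^ 3 ≤ (2 * K * c * N ^ 2) ^ 3 := by gcongr
      _ = _ := by ring
  have hq : ∀ {x : ℝ}, 0 ≤ x → x ≤ 1 → 0 ≤ x * (1 - x) / 2 ∧ x * (1 - x) / 2 ≤ 1 := by
    intro x h0 h1
    constructor <;> nlinarith [mul_nonneg h0 (sub_nonneg.2 h1)]
  have h1 : (1 + s) ^ θ * (1 + t) ^ φ ≤ _ :=
    (mul_le_mul (one_add_rpow_le_taylor hθ hθ' hs1) (one_add_rpow_le_taylor hφ hφ' ht1)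
      (Real.rpow_nonneg (by linarith) _)
      ((Real.rpow_nonneg (by linarith) _).trans (one_add_rpow_le_taylor hθ hθ' hs1))).trans
    (mul_taylor_le (hq hθ hθ').1 (hq hθ hθ').2 (hq hφ hφ').1 (hq hφ hφ').2 hθ hθ' hφ hφ' hR hs ht)
  have h2 := quadForm_perturb_le (hq hθ hθ').1 (hq hθ hθ').2 (hq hφ hφ').1 (hq hφ hφ').2
    (mul_nonneg hθ hφ) (mul_le_one₀ hθ' hφ hφ') hc hc' hN hl hm he he'
  rw [show c * l + (s - c * l) = s by ring, show c * m + (t - c * m) = t by ring] at h2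
  have h3 := cube s l hl he
  have h4 := cube t m hm he'
  have h5 : 20 * R ^ 3 * (|s| ^ 3 + |t| ^ 3) ≤ 20 * R ^ 3 * (16 * K ^ 3 * (c ^ 3 * N ^ 6)) := by
    have : 0 ≤ R := by linarith
    gcongr
    linarith
  linarith

/-- One small Gaussian-like step: if `X`, `Y` are, up to quadratic errors, affine in centred
variables `l`, `m` whose covariances satisfy the `ρ`-concavity condition, then
`E[X ^ θ Y ^ φ] ≤ E[X] ^ θ E[Y] ^ φ + O(c ^ 3)`. -/
lemma exists_integral_rpow_mul_rpow_le_add {Ω : Type*} [MeasurableSpace Ω] {P : Measure Ω}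
    [IsProbabilityMeasure P] {θ φ : ℝ} (hθ : 0 ≤ θ) (hθ' : θ ≤ 1) (hφ : 0 ≤ φ) (hφ' : φ ≤ 1)
    {a b : ℝ} (ha : 0 < a) (K : ℝ) {N : Ω → ℝ} (hNm : Measurable N) (hN : ∀ ω, 1 ≤ N ω)
    (hNi : Integrable (fun ω ↦ N ω ^ 6) P) :
    ∃ C : ℝ, 0 ≤ C ∧ ∀ (X Y l m : Ω → ℝ) (x₀ y₀ c : ℝ), Measurable X → Measurable Y → Measurable l →
      Measurable m → 0 ≤ c → c ≤ 1 → (∀ ω, a ≤ X ω ∧ X ω ≤ b) → (∀ ω, a ≤ Y ω ∧ Y ω ≤ b) →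
      (∀ ω, |l ω| ≤ K * N ω) → (∀ ω, |m ω| ≤ K * N ω) →
      (∀ ω, |X ω - x₀ - c * l ω| ≤ K * c ^ 2 * N ω ^ 2) →
      (∀ ω, |Y ω - y₀ - c * m ω| ≤ K * c ^ 2 * N ω ^ 2) →
      ∫ ω, l ω ∂P = 0 → ∫ ω, m ω ∂P = 0 →
      (∀ x y : ℝ, θ * φ * (x * y * ∫ ω, l ω * m ω ∂P) ≤ θ * (1 - θ) / 2 * (x ^ 2 * ∫ ω, l ω ^ 2 ∂P) +
        φ * (1 - φ) / 2 * (y ^ 2 * ∫ ω, m ω ^ 2 ∂P)) →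
      ∫ ω, X ω ^ θ * Y ω ^ φ ∂P ≤ (∫ ω, X ω ∂P) ^ θ * (∫ ω, Y ω ∂P) ^ φ + C * c ^ 3 := by
  let A : ℝ := ∫ ω, N ω ^ 2 ∂P
  let K₁ : ℝ := |K| * (1 + A) / a
  let R : ℝ := max 1 (b / a)
  let D : ℝ := 9 * K₁ ^ 2 + 320 * R ^ 3 * K₁ ^ 3
  let I : ℝ := ∫ ω, N ω ^ 6 ∂P
  have hA : 0 ≤ A := integral_nonneg fun ω ↦ by positivity
  have hK₁ : 0 ≤ K₁ := by positivity
  have hR1 : 1 ≤ R := le_max_left _ _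
  have hI : 0 ≤ I := integral_nonneg fun ω ↦ by have := hN ω; positivity
  have hD : 0 ≤ D := by positivity
  have hNpow : ∀ k ≤ 6, Integrable (fun ω ↦ N ω ^ k) P := fun k hk ↦ by
    refine hNi.mono' (hNm.pow_const k).aestronglyMeasurable (.of_forall fun ω ↦ ?_)
    have := hN ω
    rw [Real.norm_of_nonneg (by positivity)]
    exact pow_le_pow_right₀ this hk
  refine ⟨|b| ^ θ * |b| ^ φ * (D * I), by positivity, ?_⟩
  intro X Y l m x₀ y₀ c hX hY hl hm hc hc' hXab hYab hlN hmN hXe hYe hl0 hm0 hcov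
  -- integrability of the linear parts
  have hint : ∀ {u : Ω → ℝ}, Measurable u → (∀ ω, |u ω| ≤ K * N ω) → Integrable u P := by
    intro u hu huN
    refine ((hNpow 1 (by norm_num)).const_mul K).mono' hu.aestronglyMeasurable
      (.of_forall fun ω ↦ ?_)
    simpa using huN ω
  have hint2 : ∀ {u v : Ω → ℝ}, Measurable u → Measurable v → (∀ ω, |u ω| ≤ K * N ω) →
      (∀ ω, |v ω| ≤ K * N ω) → Integrable (fun ω ↦ u ω * v ω) P := by
    intro u v hu hv huN hvN
    refine ((hNpow 2 (by norm_num)).const_mul (K * K)).mono' (hu.mul hv).aestronglyMeasurable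
      (.of_forall fun ω ↦ ?_)
    calc ‖u ω * v ω‖ = |u ω| * |v ω| := by rw [Real.norm_eq_abs, abs_mul]
      _ ≤ (K * N ω) * (K * N ω) :=
        mul_le_mul (huN ω) (hvN ω) (abs_nonneg _) ((abs_nonneg _).trans (huN ω))
      _ = K * K * N ω ^ 2 := by ring
  have hbdd : ∀ {u : Ω → ℝ}, Measurable u → (∀ ω, a ≤ u ω ∧ u ω ≤ b) → Integrable u P := by
    intro u hu hub
    refine Integrable.of_bound hu.aestronglyMeasurable b (.of_forall fun ω ↦ ?_)
    rw [Real.norm_of_nonneg (ha.le.trans (hub ω).1)]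
    exact (hub ω).2
  -- the relative fluctuation of a variable around its mean
  have fluct : ∀ {Z u : Ω → ℝ} {z₀ : ℝ}, Measurable Z → Measurable u → (∀ ω, a ≤ Z ω ∧ Z ω ≤ b) →
      (∀ ω, |u ω| ≤ K * N ω) → (∀ ω, |Z ω - z₀ - c * u ω| ≤ K * c ^ 2 * N ω ^ 2) →
      ∫ ω, u ω ∂P = 0 → a ≤ ∫ ω, Z ω ∂P ∧ ∫ ω, Z ω ∂P ≤ b ∧ ∀ ω,
        |u ω / ∫ ω, Z ω ∂P| ≤ K₁ * N ω ∧ |Z ω / (∫ ω, Z ω ∂P) - 1| ≤ R ∧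
        |Z ω / (∫ ω, Z ω ∂P) - 1 - c * (u ω / ∫ ω, Z ω ∂P)| ≤ K₁ * c ^ 2 * N ω ^ 2 := by
    intro Z u z₀ hZ hu hZab huN hZe hu0
    have hZi := hbdd hZ hZab
    have hui := hint hu huN
    set M := ∫ ω, Z ω ∂P with hM
    have hMa : a ≤ M := by
      have := integral_mono (integrable_const a) hZi fun ω ↦ (hZab ω).1
      simpa using this
    have hMb : M ≤ b := by
      have := integral_mono hZi (integrable_const b) fun ω ↦ (hZab ω).2
      simpa using this
    have hM0 : 0 < M := ha.trans_le hMa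
    have hKK : K ≤ |K| := le_abs_self K
    have hdev : |M - z₀| ≤ |K| * c ^ 2 * A := by
      have h1 : M - z₀ = ∫ ω, (Z ω - z₀ - c * u ω) ∂P := by
        rw [integral_sub (by exact hZi.sub (integrable_const _)) (hui.const_mul c),
          integral_sub hZi (integrable_const _), integral_const_mul, hu0]
        simp [hM]
      rw [h1, ← Real.norm_eq_abs]
      refine (norm_integral_le_of_norm_le ((hNpow 2 (by norm_num)).const_mul (|K| * c ^ 2))
        (.of_forall fun ω ↦ ?_)).trans (integral_const_mul _ _).le
      exact (hZe ω).trans (by gcongr)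
    refine ⟨hMa, hMb, fun ω ↦ ⟨?_, ?_, ?_⟩⟩
    · rw [abs_div, abs_of_pos hM0, div_le_iff₀ hM0]
      have := hN ω
      calc |u ω| ≤ |K| * N ω := (huN ω).trans (by gcongr)
        _ ≤ |K| * (1 + A) * N ω := by
          have : 0 ≤ |K| * A * N ω := by positivity
          nlinarith
        _ = K₁ * N ω * a := by simp only [K₁]; field_simp
        _ ≤ K₁ * N ω * M := by gcongr
    · rw [abs_le]
      have h1 : Z ω / M ≤ b / a :=
        div_le_div₀ (by linarith [hZab ω]) (hZab ω).2 ha hMa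
      have h2 : 0 ≤ Z ω / M := div_nonneg (ha.le.trans (hZab ω).1) hM0.le
      have h3 : b / a ≤ R := le_max_right _ _
      constructor <;> linarith
    · have h1 : Z ω / M - 1 - c * (u ω / M) = (Z ω - M - c * u ω) / M := by
        field_simp
      rw [h1, abs_div, abs_of_pos hM0, div_le_iff₀ hM0]
      have hN2 : 1 ≤ N ω ^ 2 := one_le_pow₀ (hN ω)
      calc |Z ω - M - c * u ω| = |(Z ω - z₀ - c * u ω) - (M - z₀)| := by ring_nf
        _ ≤ |Z ω - z₀ - c * u ω| + |M - z₀| := abs_sub _ _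
        _ ≤ |K| * c ^ 2 * N ω ^ 2 + |K| * c ^ 2 * A * N ω ^ 2 := by
          refine add_le_add ((hZe ω).trans (by gcongr)) (hdev.trans ?_)
          exact le_mul_of_one_le_right (by positivity) hN2
        _ = K₁ * c ^ 2 * N ω ^ 2 * a := by simp only [K₁]; field_simp
        _ ≤ K₁ * c ^ 2 * N ω ^ 2 * M := by gcongr
  obtain ⟨hXa, hXb, hXf⟩ := fluct hX hl hXab hlN hXe hl0
  obtain ⟨hYa, hYb, hYf⟩ := fluct hY hm hYab hmN hYe hm0
  have hXi := hbdd hX hXab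
  have hYi := hbdd hY hYab
  set MX := ∫ ω, X ω ∂P with hMX
  set MY := ∫ ω, Y ω ∂P with hMY
  have hMX0 : 0 < MX := ha.trans_le hXa
  have hMY0 : 0 < MY := ha.trans_le hYa
  let Q : Ω → ℝ := fun ω ↦ -(θ * (1 - θ) / 2 * (l ω / MX) ^ 2) - φ * (1 - φ) / 2 * (m ω / MY) ^ 2 +
    θ * φ * (l ω / MX * (m ω / MY))
  have hpt : ∀ ω, X ω ^ θ * Y ω ^ φ ≤ MX ^ θ * MY ^ φ * (1 + θ * (X ω / MX - 1) +
      φ * (Y ω / MY - 1) + c ^ 2 * Q ω + D * (c ^ 3 * N ω ^ 6)) := by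
    intro ω
    have hXp : 0 < X ω / MX := div_pos (ha.trans_le (hXab ω).1) hMX0
    have hYp : 0 < Y ω / MY := div_pos (ha.trans_le (hYab ω).1) hMY0
    have h := rpow_mul_rpow_le_quadratic hθ hθ' hφ hφ' hc hc' (hN ω) hR1
      (s := X ω / MX - 1) (t := Y ω / MY - 1) (by linarith) (by linarith) (hXf ω).2.1 (hYf ω).2.1
      (hXf ω).1 (hYf ω).1 (hXf ω).2.2 (hYf ω).2.2
    have e1 : X ω ^ θ = MX ^ θ * (1 + (X ω / MX - 1)) ^ θ := by
      rw [← Real.mul_rpow hMX0.le (by linarith)]; congr 1; field_simp; ring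
    have e2 : Y ω ^ φ = MY ^ φ * (1 + (Y ω / MY - 1)) ^ φ := by
      rw [← Real.mul_rpow hMY0.le (by linarith)]; congr 1; field_simp; ring
    rw [e1, e2, mul_mul_mul_comm]
    exact mul_le_mul_of_nonneg_left h (by positivity)
  have il2 : Integrable (fun ω ↦ l ω ^ 2) P := by simpa [sq] using hint2 hl hl hlN hlN
  have im2 : Integrable (fun ω ↦ m ω ^ 2) P := by simpa [sq] using hint2 hm hm hmN hmN
  have ilm := hint2 hl hm hlN hmN
  have hQ' : Q = fun ω ↦ -(θ * (1 - θ) / 2 * (1 / MX) ^ 2) * l ω ^ 2 -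
      (φ * (1 - φ) / 2 * (1 / MY) ^ 2) * m ω ^ 2 +
      (θ * φ * (1 / MX * (1 / MY))) * (l ω * m ω) := by
    funext ω; simp only [Q]; ring
  have iQ : Integrable Q P := by
    rw [hQ']
    exact ((il2.const_mul _).sub (im2.const_mul _)).add (ilm.const_mul _)
  have hQle : ∫ ω, Q ω ∂P ≤ 0 := by
    simp only [hQ']
    rw [integral_add (by exact (il2.const_mul _).sub (im2.const_mul _)) (ilm.const_mul _),
      integral_sub (il2.const_mul _) (im2.const_mul _), integral_const_mul, integral_const_mul,
      integral_const_mul]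
    have := hcov (1 / MX) (1 / MY)
    linarith
  have iX : Integrable (fun ω ↦ θ * (X ω / MX - 1)) P :=
    ((hXi.div_const _).sub (integrable_const _)).const_mul _
  have iY : Integrable (fun ω ↦ φ * (Y ω / MY - 1)) P :=
    ((hYi.div_const _).sub (integrable_const _)).const_mul _
  have eX : ∫ ω, θ * (X ω / MX - 1) ∂P = 0 := by
    rw [integral_const_mul, integral_sub (hXi.div_const _) (integrable_const _), integral_div,
      ← hMX, div_self hMX0.ne']
    simp
  have eY : ∫ ω, φ * (Y ω / MY - 1) ∂P = 0 := by
    rw [integral_const_mul, integral_sub (hYi.div_const _) (integrable_const _), integral_div,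
      ← hMY, div_self hMY0.ne']
    simp
  have iN : Integrable (fun ω ↦ D * (c ^ 3 * N ω ^ 6)) P := (hNi.const_mul _).const_mul _
  have iR1 := (((integrable_const (μ := P) (1 : ℝ)).add iX).add iY).add (iQ.const_mul (c ^ 2))
  have hmaj : ∫ ω, X ω ^ θ * Y ω ^ φ ∂P ≤ ∫ ω, MX ^ θ * MY ^ φ * (1 + θ * (X ω / MX - 1) +
      φ * (Y ω / MY - 1) + c ^ 2 * Q ω + D * (c ^ 3 * N ω ^ 6)) ∂P := by
    refine integral_mono_of_nonneg (.of_forall fun ω ↦ ?_) ((iR1.add iN).const_mul _)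
      (.of_forall hpt)
    have := ha.trans_le (hXab ω).1
    have := ha.trans_le (hYab ω).1
    simp only [Pi.zero_apply]
    positivity
  have hval : ∫ ω, MX ^ θ * MY ^ φ * (1 + θ * (X ω / MX - 1) +
      φ * (Y ω / MY - 1) + c ^ 2 * Q ω + D * (c ^ 3 * N ω ^ 6)) ∂P =
      MX ^ θ * MY ^ φ * (1 + c ^ 2 * ∫ ω, Q ω ∂P + D * (c ^ 3 * I)) := by
    rw [integral_const_mul, integral_add (by exact iR1) iN,
      integral_add (by exact ((integrable_const (μ := P) (1 : ℝ)).add iX).add iY) (iQ.const_mul (c ^ 2)),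
      integral_add (by exact (integrable_const (μ := P) (1 : ℝ)).add iX) iY,
      integral_add (integrable_const (μ := P) (1 : ℝ)) iX, eX, eY, integral_const_mul,
      integral_const_mul, integral_const_mul]
    simp [I]
  rw [hval] at hmaj
  have hb : MX ^ θ * MY ^ φ ≤ |b| ^ θ * |b| ^ φ := by
    have := le_abs_self b
    gcongr <;> linarith
  calc _ ≤ _ := hmaj
    _ ≤ MX ^ θ * MY ^ φ * (1 + D * (c ^ 3 * I)) := by
      gcongr
      have : c ^ 2 * ∫ ω, Q ω ∂P ≤ 0 := mul_nonpos_of_nonneg_of_nonpos (by positivity) hQle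
      linarith
    _ = MX ^ θ * MY ^ φ + MX ^ θ * MY ^ φ * (D * (c ^ 3 * I)) := by ring
    _ ≤ MX ^ θ * MY ^ φ + |b| ^ θ * |b| ^ φ * (D * (c ^ 3 * I)) := by gcongr
    _ = _ := by ring

section GaussianFlow

open ProbabilityTheory

variable {V E : Type*} [NormedAddCommGroup V] [NormedSpace ℝ V] [MeasurableSpace V] [BorelSpace V]
  [SecondCountableTopology V] [CompleteSpace V] [NormedAddCommGroup E] [NormedSpace ℝ E]
  [MeasurableSpace E] [BorelSpace E] [SecondCountableTopology E] [CompleteSpace E]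

/-- Functions with values in `[a, b]` and a quadratically controlled first-order expansion, whose
differentials take values in the range of `T`. -/
structure LipTaylor (T : E →L[ℝ] StrongDual ℝ V) (a b L : ℝ) (F : V → ℝ) : Prop where
  measurable : Measurable F
  bounds : ∀ x, a ≤ F x ∧ F x ≤ b
  taylor : ∃ d : V → E, Measurable d ∧ (∀ x, ‖d x‖ ≤ L) ∧
    ∀ x h, |F (x + h) - F x - T (d x) h| ≤ L * ‖h‖ ^ 2

/-- Averages over Gaussian displacements of size `c`. -/
noncomputable def gaussFlow (Γ : Measure V) (c : ℝ) (F : V → ℝ) (z : V) : ℝ :=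
  ∫ h, F (z + c • h) ∂Γ

variable {Γ : Measure V} {T : E →L[ℝ] StrongDual ℝ V} {a b L : ℝ} {F : V → ℝ}

lemma integrable_of_bounds {Ω : Type*} [MeasurableSpace Ω] {P : Measure Ω} [IsFiniteMeasure P]
    {f : Ω → ℝ} (hf : Measurable f) (hb : ∀ ω, a ≤ f ω ∧ f ω ≤ b) : Integrable f P :=
  Integrable.of_bound hf.aestronglyMeasurable (max |a| |b|)
    (.of_forall fun ω ↦ abs_le_max_abs_abs (hb ω).1 (hb ω).2)

lemma integral_mem_bounds {Ω : Type*} [MeasurableSpace Ω] {P : Measure Ω} [IsProbabilityMeasure P]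
    {f : Ω → ℝ} (hf : Measurable f) (hb : ∀ ω, a ≤ f ω ∧ f ω ≤ b) :
    a ≤ ∫ ω, f ω ∂P ∧ ∫ ω, f ω ∂P ≤ b := by
  have hi : Integrable f P := integrable_of_bounds hf hb
  constructor
  · simpa using integral_mono (integrable_const a) hi fun ω ↦ (hb ω).1
  · simpa using integral_mono hi (integrable_const b) fun ω ↦ (hb ω).2

lemma measurable_gaussFlow [SFinite Γ] (hF : Measurable F) (c : ℝ) :
    Measurable (gaussFlow Γ c F) := by
  have : StronglyMeasurable (fun p : V × V ↦ F (p.1 + c • p.2)) :=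
    (hF.comp (by fun_prop)).stronglyMeasurable
  exact this.integral_prod_right.measurable

lemma LipTaylor.average [IsProbabilityMeasure Γ] (hF : LipTaylor T a b L F) (c : ℝ) :
    LipTaylor T a b L (gaussFlow Γ c F) := by
  obtain ⟨d, hd, hdL, hdF⟩ := hF.taylor
  have hi : ∀ z, Integrable (fun h ↦ F (z + c • h)) Γ := fun z ↦
    integrable_of_bounds (hF.measurable.comp (by fun_prop)) fun h ↦ hF.bounds _
  have hdi : ∀ z, Integrable (fun h ↦ d (z + c • h)) Γ := fun z ↦
    Integrable.of_bound (hd.comp (by fun_prop)).aestronglyMeasurable L (.of_forall fun h ↦ hdL _)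
  refine ⟨measurable_gaussFlow hF.measurable c,
    fun z ↦ integral_mem_bounds (hF.measurable.comp (by fun_prop)) fun h ↦ hF.bounds _,
    fun z ↦ ∫ h, d (z + c • h) ∂Γ, ?_, ?_, ?_⟩
  · have : StronglyMeasurable (fun p : V × V ↦ d (p.1 + c • p.2)) :=
      (hd.comp (by fun_prop)).stronglyMeasurable
    exact this.integral_prod_right.measurable
  · intro z
    simpa using norm_integral_le_of_norm_le_const (μ := Γ) (.of_forall fun h ↦ hdL (z + c • h))
  · intro z k
    have h1 : T (∫ h, d (z + c • h) ∂Γ) k = ∫ h, T (d (z + c • h)) k ∂Γ :=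
      ((T.flip k).integral_comp_comm (hdi z)).symm
    have hTi : Integrable (fun h ↦ T (d (z + c • h)) k) Γ := (T.flip k).integrable_comp (hdi z)
    rw [h1, gaussFlow, gaussFlow, ← integral_sub (hi _) (hi _),
      ← integral_sub (by exact (hi _).sub (hi _)) hTi]
    rw [← Real.norm_eq_abs]
    have := norm_integral_le_of_norm_le_const (μ := Γ) (C := L * ‖k‖ ^ 2)
      (f := fun h ↦ F (z + k + c • h) - F (z + c • h) - T (d (z + c • h)) k)
      (.of_forall fun h ↦ ?_)
    · simpa using this
    · have := hdF (z + c • h) k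
      rwa [show z + c • h + k = z + k + c • h by abel] at this

/-- Stability of centred Gaussian measures. -/
lemma IsGaussian.conv_self_eq_map_smul [IsGaussian Γ]
    (hΓ : ∀ l : StrongDual ℝ V, ∫ h, l h ∂Γ = 0) :
    Γ.conv Γ = Γ.map (fun h ↦ √2 • h) := by
  refine Measure.ext_of_charFunDual (funext fun l ↦ ?_)
  have hs : (fun h : V ↦ √2 • h) = ⇑((√2 : ℝ) • ContinuousLinearMap.id ℝ V : V →L[ℝ] V) := by
    ext; simp
  rw [charFunDual_conv, hs, charFunDual_map, IsGaussian.charFunDual_eq, IsGaussian.charFunDual_eq]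
  have hl : l.comp ((√2 : ℝ) • ContinuousLinearMap.id ℝ V) = (√2 : ℝ) • l := by ext; simp
  rw [hl]
  have hv : Var[((√2 : ℝ) • l : StrongDual ℝ V); Γ] = 2 * Var[l; Γ] := by
    have : ((√2 : ℝ) • l : StrongDual ℝ V) = fun h ↦ √2 * l h := rfl
    rw [this, variance_const_mul]; norm_num
  have h1 : ∫ x, ((l x : ℝ) : ℂ) ∂Γ = 0 := by rw [integral_complex_ofReal, hΓ]; simp
  have h2 : ∫ x, ((((√2 : ℝ) • l : StrongDual ℝ V) x : ℝ) : ℂ) ∂Γ = 0 := by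
    rw [integral_complex_ofReal, hΓ]; simp
  rw [hv, ← Complex.exp_add]
  congr 1
  simp only [h1, h2]
  push_cast
  ring

lemma gaussFlow_gaussFlow [IsGaussian Γ] (hΓ : ∀ l : StrongDual ℝ V, ∫ h, l h ∂Γ = 0)
    (hF : Measurable F) (hb : ∀ x, a ≤ F x ∧ F x ≤ b) (c : ℝ) (z : V) :
    gaussFlow Γ c (gaussFlow Γ c F) z = gaussFlow Γ (√2 * c) F z := by
  have hm : Measurable fun x ↦ F (z + c • x) := hF.comp (by fun_prop)
  have h1 : ∫ x, F (z + c • x) ∂(Γ.conv Γ) = gaussFlow Γ c (gaussFlow Γ c F) z := by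
    rw [integral_conv (integrable_of_bounds hm fun x ↦ hb _)]
    simp only [gaussFlow, smul_add, add_assoc]
  rw [← h1, IsGaussian.conv_self_eq_map_smul hΓ, integral_map (by fun_prop)
    hm.aestronglyMeasurable]
  simp only [gaussFlow, smul_smul, mul_comm]

variable {T' : E →L[ℝ] StrongDual ℝ V} {θ φ : ℝ}

lemma exists_gaussFlow_rpow_mul_rpow_le_add [IsGaussian Γ]
    (hΓ : ∀ l : StrongDual ℝ V, ∫ h, l h ∂Γ = 0) (hθ : 0 ≤ θ) (hθ' : θ ≤ 1) (hφ : 0 ≤ φ)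
    (hφ' : φ ≤ 1) (ha : 0 < a) (L : ℝ)
    (hcov : ∀ e e' : E, θ * φ * ∫ h, T e h * T' e' h ∂Γ ≤
      θ * (1 - θ) / 2 * ∫ h, T e h ^ 2 ∂Γ + φ * (1 - φ) / 2 * ∫ h, T' e' h ^ 2 ∂Γ) :
    ∃ C, 0 ≤ C ∧ ∀ (F G : V → ℝ) (c : ℝ) (z : V), LipTaylor T a b L F → LipTaylor T' a b L G →
      0 ≤ c → c ≤ 1 → gaussFlow Γ c (fun x ↦ F x ^ θ * G x ^ φ) z ≤
        gaussFlow Γ c F z ^ θ * gaussFlow Γ c G z ^ φ + C * c ^ 3 := by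
  let N : V → ℝ := fun h ↦ 1 + ‖h‖
  have hN : ∀ h, 1 ≤ N h := fun h ↦ by simp [N]
  have hNi : Integrable (fun h ↦ N h ^ 6) Γ := by
    have hid : MemLp (fun h : V ↦ ‖h‖) (6 : ℕ) Γ :=
      MemLp.norm (IsGaussian.memLp_id Γ (6 : ℕ) (ENNReal.natCast_ne_top 6))
    have h6 : MemLp N (6 : ℕ) Γ := MemLp.add (memLp_const (1 : ℝ)) hid
    have := MemLp.integrable_norm_pow h6 (by norm_num)
    refine this.congr (.of_forall fun h ↦ ?_)
    simp only [Real.norm_of_nonneg (zero_le_one.trans (hN h))]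
  let K : ℝ := (‖T‖ + ‖T'‖ + 1) * L
  obtain ⟨C, hC0, hC⟩ := exists_integral_rpow_mul_rpow_le_add (P := Γ) hθ hθ' hφ hφ' (b := b) ha K
    (N := N) (by fun_prop) hN hNi
  refine ⟨C, hC0, fun F G c z hF hG hc hc' ↦ ?_⟩
  have lin : ∀ (S : E →L[ℝ] StrongDual ℝ V) (e : E), ‖S‖ ≤ ‖T‖ + ‖T'‖ + 1 → ‖e‖ ≤ L → ∀ h,
      |S e h| ≤ K * N h := by
    intro S e hS he h
    have hL : 0 ≤ L := (norm_nonneg _).trans he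
    calc |S e h| ≤ ‖S‖ * ‖e‖ * ‖h‖ := S.le_opNorm₂ e h
      _ ≤ (‖T‖ + ‖T'‖ + 1) * L * (1 + ‖h‖) := by
        gcongr
        simp
  have rem : ∀ (S : E →L[ℝ] StrongDual ℝ V) (H : V → ℝ) (e : E), ‖e‖ ≤ L →
      (∀ h, |H (z + h) - H z - S e h| ≤ L * ‖h‖ ^ 2) →
      ∀ h, |H (z + c • h) - H z - c * S e h| ≤ K * c ^ 2 * N h ^ 2 := by
    intro S H e he hH h
    have hL : 0 ≤ L := (norm_nonneg _).trans he
    have := hH (c • h)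
    rw [map_smul, smul_eq_mul, norm_smul, Real.norm_of_nonneg hc] at this
    refine this.trans ?_
    have h1 : L ≤ K := le_mul_of_one_le_left hL (by linarith [norm_nonneg T, norm_nonneg T'])
    calc L * (c * ‖h‖) ^ 2 = L * c ^ 2 * ‖h‖ ^ 2 := by ring
      _ ≤ K * c ^ 2 * (1 + ‖h‖) ^ 2 := by
        gcongr
        · linarith
  obtain ⟨d, hd, hdL, hdF⟩ := hF.taylor
  obtain ⟨d', hd', hdL', hdG⟩ := hG.taylor
  refine hC _ _ (fun h ↦ T (d z) h) (fun h ↦ T' (d' z) h) (F z) (G z) c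
    (hF.measurable.comp (by fun_prop)) (hG.measurable.comp (by fun_prop)) (by fun_prop)
    (by fun_prop) hc hc' (fun h ↦ hF.bounds _) (fun h ↦ hG.bounds _)
    (lin T _ (by linarith [norm_nonneg T']) (hdL z))
    (lin T' _ (by linarith [norm_nonneg T]) (hdL' z))
    (rem T F _ (hdL z) (hdF z)) (rem T' G _ (hdL' z) (hdG z)) (hΓ _) (hΓ _) fun x y ↦ ?_
  have h := hcov (x • d z) (y • d' z)
  simp only [map_smul, _root_.smul_apply, smul_eq_mul, mul_pow,
    integral_const_mul] at h
  have h2 : ∀ h, x * T (d z) h * (y * T' (d' z) h) = x * y * (T (d z) h * T' (d' z) h) :=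
    fun h ↦ by ring
  simpa only [h2, integral_const_mul] using h

lemma gaussFlow_one_zero : gaussFlow Γ 1 F 0 = ∫ h, F h ∂Γ := by simp [gaussFlow]

/-- Hypercontractivity in bilinear form for smooth functions on a Gaussian space. -/
lemma LipTaylor.integral_rpow_mul_rpow_le [IsGaussian Γ]
    (hΓ : ∀ l : StrongDual ℝ V, ∫ h, l h ∂Γ = 0) (hθ : 0 ≤ θ) (hθ' : θ ≤ 1) (hφ : 0 ≤ φ)
    (hφ' : φ ≤ 1) (ha : 0 < a)
    (hcov : ∀ e e' : E, θ * φ * ∫ h, T e h * T' e' h ∂Γ ≤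
      θ * (1 - θ) / 2 * ∫ h, T e h ^ 2 ∂Γ + φ * (1 - φ) / 2 * ∫ h, T' e' h ^ 2 ∂Γ)
    {G : V → ℝ} (hF : LipTaylor T a b L F) (hG : LipTaylor T' a b L G) :
    ∫ h, F h ^ θ * G h ^ φ ∂Γ ≤ (∫ h, F h ∂Γ) ^ θ * (∫ h, G h ∂Γ) ^ φ := by
  obtain ⟨C, hC0, hC⟩ := exists_gaussFlow_rpow_mul_rpow_le_add (b := b) hΓ hθ hθ' hφ hφ' ha L hcov
  have prodBounds : ∀ {F G : V → ℝ}, LipTaylor T a b L F → LipTaylor T' a b L G → ∀ x,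
      0 ≤ F x ^ θ * G x ^ φ ∧ F x ^ θ * G x ^ φ ≤ b ^ θ * b ^ φ := by
    intro F G hF hG x
    have h1 := hF.bounds x
    have h2 := hG.bounds x
    have h3 : 0 ≤ F x := ha.le.trans h1.1
    have h4 : 0 ≤ G x := ha.le.trans h2.1
    have h5 : 0 ≤ b := h3.trans h1.2
    refine ⟨by positivity, ?_⟩
    gcongr
    exacts [h1.2, h2.2]
  have prodMeas : ∀ {F G : V → ℝ}, LipTaylor T a b L F → LipTaylor T' a b L G →
      Measurable fun x ↦ F x ^ θ * G x ^ φ := fun hF hG ↦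
    (hF.measurable.pow_const θ).mul (hG.measurable.pow_const φ)
  have doubling : ∀ (k : ℕ) (c ε : ℝ), (∀ (F G : V → ℝ) (z : V), LipTaylor T a b L F →
      LipTaylor T' a b L G → gaussFlow Γ c (fun x ↦ F x ^ θ * G x ^ φ) z ≤
        gaussFlow Γ c F z ^ θ * gaussFlow Γ c G z ^ φ + ε) →
      ∀ (F G : V → ℝ) (z : V), LipTaylor T a b L F → LipTaylor T' a b L G →
        gaussFlow Γ (√2 ^ k * c) (fun x ↦ F x ^ θ * G x ^ φ) z ≤
        gaussFlow Γ (√2 ^ k * c) F z ^ θ * gaussFlow Γ (√2 ^ k * c) G z ^ φ + 2 ^ k * ε := by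
    intro k c ε h
    induction k with
    | zero => simpa using h
    | succ k ih =>
      intro F G z hF hG
      set c' := √2 ^ k * c with hc'
      have e : √2 ^ (k + 1) * c = √2 * c' := by rw [hc', pow_succ]; ring
      rw [e, ← gaussFlow_gaussFlow hΓ (prodMeas hF hG) (prodBounds hF hG),
        ← gaussFlow_gaussFlow hΓ hF.measurable hF.bounds,
        ← gaussFlow_gaussFlow hΓ hG.measurable hG.bounds]
      have hF' := hF.average (Γ := Γ) c'
      have hG' := hG.average (Γ := Γ) c'
      calc gaussFlow Γ c' (gaussFlow Γ c' fun x ↦ F x ^ θ * G x ^ φ) z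
          ≤ gaussFlow Γ c' (fun x ↦ gaussFlow Γ c' F x ^ θ * gaussFlow Γ c' G x ^ φ) z
            + 2 ^ k * ε := by
            have i1 : Integrable (fun h ↦ gaussFlow Γ c' F (z + c' • h) ^ θ *
                gaussFlow Γ c' G (z + c' • h) ^ φ) Γ :=
              integrable_of_bounds ((prodMeas hF' hG').comp (by fun_prop))
                fun h ↦ prodBounds hF' hG' _
            have i2 : Integrable (fun h ↦ gaussFlow Γ c' (fun x ↦ F x ^ θ * G x ^ φ)
                (z + c' • h)) Γ :=
              integrable_of_bounds ((measurable_gaussFlow (prodMeas hF hG) c').comp (by fun_prop))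
                fun h ↦ integral_mem_bounds ((prodMeas hF hG).comp (by fun_prop))
                  fun h' ↦ prodBounds hF hG _
            have := integral_mono i2 (i1.add (integrable_const (2 ^ k * ε))) fun h ↦
              ih F G (z + c' • h) hF hG
            rw [integral_add' i1 (integrable_const _)] at this
            simpa [gaussFlow] using this
        _ ≤ _ := by
          have := ih _ _ z hF' hG'
          rw [pow_succ]
          linarith
  have bound : ∀ k : ℕ, ∫ h, F h ^ θ * G h ^ φ ∂Γ ≤
      (∫ h, F h ∂Γ) ^ θ * (∫ h, G h ∂Γ) ^ φ + C * ((√2)⁻¹) ^ k := by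
    intro k
    have hs : 1 ≤ √2 := Real.one_le_sqrt.2 (by norm_num)
    have h := doubling k ((√2)⁻¹ ^ k) (C * ((√2)⁻¹ ^ k) ^ 3)
      (fun F G z hF hG ↦ hC F G _ z hF hG (by positivity)
        (pow_le_one₀ (by positivity) (inv_le_one_of_one_le₀ hs))) F G 0 hF hG
    rw [← mul_pow, mul_inv_cancel₀ (by positivity), one_pow] at h
    simp only [gaussFlow_one_zero] at h
    refine h.trans_eq ?_
    congr 1
    have h2 : (2 : ℝ) ^ k * ((√2)⁻¹ ^ k) ^ 2 = 1 := by
      rw [← pow_mul, mul_comm k 2, pow_mul, ← mul_pow, inv_pow, Real.sq_sqrt (by norm_num)]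
      norm_num
    calc (2 : ℝ) ^ k * (C * ((√2)⁻¹ ^ k) ^ 3)
        = C * (√2)⁻¹ ^ k * ((2 : ℝ) ^ k * ((√2)⁻¹ ^ k) ^ 2) := by ring
      _ = _ := by rw [h2, mul_one]
  have hlt : (√2)⁻¹ < 1 := inv_lt_one_of_one_lt₀ (Real.lt_sqrt_of_sq_lt (by norm_num))
  have := (tendsto_pow_atTop_nhds_zero_of_lt_one (by positivity) hlt).const_mul C
  have := this.const_add ((∫ h, F h ∂Γ) ^ θ * (∫ h, G h ∂Γ) ^ φ)
  rw [mul_zero, add_zero] at this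
  exact ge_of_tendsto' this bound

end GaussianFlow

section StdGaussian

open ProbabilityTheory
open scoped RealInnerProductSpace

variable {E : Type*} [NormedAddCommGroup E] [InnerProductSpace ℝ E] [FiniteDimensional ℝ E]
  [MeasurableSpace E] [BorelSpace E]

/-- Rotation invariance of the standard Gaussian measure. -/
lemma stdGaussian_prod_map_add {ρ σ : ℝ} (h : ρ ^ 2 + σ ^ 2 = 1) :
    ((stdGaussian E).prod (stdGaussian E)).map (fun p ↦ ρ • p.1 + σ • p.2) = stdGaussian E := by
  let A : E × E →L[ℝ] E := ρ • ContinuousLinearMap.fst ℝ E E + σ • ContinuousLinearMap.snd ℝ E E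
  have hA : (fun p : E × E ↦ ρ • p.1 + σ • p.2) = ⇑A := by ext; simp [A]
  refine Measure.ext_of_charFunDual (funext fun l ↦ ?_)
  have h1 : (l.comp A).comp (.inl ℝ E E) = ρ • l := by ext; simp [A]
  have h2 : (l.comp A).comp (.inr ℝ E E) = σ • l := by ext; simp [A]
  rw [hA, charFunDual_map, charFunDual_prod, h1, h2, charFunDual_stdGaussian,
    charFunDual_stdGaussian, charFunDual_stdGaussian, ← Complex.exp_add]
  congr 1
  norm_cast
  rw [norm_smul, norm_smul, mul_pow, mul_pow, Real.norm_eq_abs, Real.norm_eq_abs, sq_abs, sq_abs]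
  linear_combination (-(‖l‖ ^ 2) / 2) * h

lemma memLp_inner_stdGaussian (e : E) : MemLp (fun x ↦ ⟪e, x⟫) 2 (stdGaussian E) :=
  (innerSL ℝ e).comp_memLp' IsGaussian.memLp_two_id

/-- Mehler covariance inequality. -/
lemma mehler_covariance_le {ρ σ θ φ : ℝ} (hρσ : ρ ^ 2 + σ ^ 2 = 1) (hθ : 0 ≤ θ) (hθ' : θ ≤ 1)
    (hφ : 0 ≤ φ) (hφ' : φ ≤ 1) (hρ : θ * φ * ρ ^ 2 ≤ (1 - θ) * (1 - φ)) (e e' : E) :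
    θ * φ * ∫ h : E × E, ⟪e, ρ • h.1 + σ • h.2⟫ * ⟪e', h.1⟫
        ∂((stdGaussian E).prod (stdGaussian E)) ≤
      θ * (1 - θ) / 2 * ∫ h : E × E, ⟪e, ρ • h.1 + σ • h.2⟫ ^ 2
        ∂((stdGaussian E).prod (stdGaussian E)) +
      φ * (1 - φ) / 2 * ∫ h : E × E, ⟪e', h.1⟫ ^ 2 ∂((stdGaussian E).prod (stdGaussian E)) := by
  have i2 : ∀ e : E, Integrable (fun x ↦ ⟪e, x⟫ ^ 2) (stdGaussian E) := fun e ↦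
    (memLp_inner_stdGaussian e).integrable_sq
  have i11 : Integrable (fun x ↦ ⟪e, x⟫ * ⟪e', x⟫) (stdGaussian E) :=
    (memLp_inner_stdGaussian e).integrable_mul (memLp_inner_stdGaussian e')
  have i1 : ∀ e : E, Integrable (fun x ↦ ⟪e, x⟫) (stdGaussian E) := fun e ↦
    (memLp_inner_stdGaussian e).integrable one_le_two
  have hz : ∫ x, ⟪e, x⟫ ∂(stdGaussian E) = 0 := integral_strongDual_stdGaussian (innerSL ℝ e)
  have hcross : ∫ h : E × E, ⟪e, ρ • h.1 + σ • h.2⟫ * ⟪e', h.1⟫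
      ∂((stdGaussian E).prod (stdGaussian E)) = ρ * ∫ x, ⟪e, x⟫ * ⟪e', x⟫ ∂(stdGaussian E) := by
    have hexp : ∀ h : E × E, ⟪e, ρ • h.1 + σ • h.2⟫ * ⟪e', h.1⟫ =
        ρ * (⟪e, h.1⟫ * ⟪e', h.1⟫) + σ * (⟪e', h.1⟫ * ⟪e, h.2⟫) := by
      intro h
      rw [inner_add_right, inner_smul_right, inner_smul_right]
      ring
    simp_rw [hexp]
    rw [integral_add ((i11.comp_fst _).const_mul ρ) (((i1 e').mul_prod (i1 e)).const_mul σ),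
      integral_const_mul, integral_const_mul, integral_prod_mul (fun x ↦ ⟪e', x⟫) (fun x ↦ ⟪e, x⟫),
      hz, integral_fun_fst (fun x ↦ ⟪e, x⟫ * ⟪e', x⟫)]
    simp
  have hsq : ∫ h : E × E, ⟪e, ρ • h.1 + σ • h.2⟫ ^ 2 ∂((stdGaussian E).prod (stdGaussian E)) =
      ∫ x, ⟪e, x⟫ ^ 2 ∂(stdGaussian E) := by
    conv_rhs => rw [← stdGaussian_prod_map_add (E := E) hρσ]
    rw [integral_map (by fun_prop) (by fun_prop)]
  have hsq' : ∫ h : E × E, ⟪e', h.1⟫ ^ 2 ∂((stdGaussian E).prod (stdGaussian E)) =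
      ∫ x, ⟪e', x⟫ ^ 2 ∂(stdGaussian E) := by
    rw [integral_fun_fst (fun x ↦ ⟪e', x⟫ ^ 2)]
    simp
  rw [hcross, hsq, hsq', ← integral_const_mul, ← integral_const_mul, ← integral_const_mul,
    ← integral_const_mul, ← integral_add ((i2 e).const_mul _) ((i2 e').const_mul _)]
  refine integral_mono ((i11.const_mul _).const_mul _)
    (((i2 e).const_mul _).add ((i2 e').const_mul _)) fun x ↦ ?_
  simp only
  set s := ⟪e, x⟫
  set t := ⟪e', x⟫
  have hA : 0 ≤ θ * (1 - θ) := mul_nonneg hθ (by linarith)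
  have hB : 0 ≤ φ * (1 - φ) := mul_nonneg hφ (by linarith)
  have key : (θ * φ * ρ) ^ 2 ≤ θ * (1 - θ) * (φ * (1 - φ)) := by
    nlinarith [mul_le_mul_of_nonneg_left hρ (mul_nonneg hθ hφ)]
  refine (le_abs_self _).trans (abs_le_of_sq_le_sq ?_ (by positivity))
  have h1 := mul_le_mul_of_nonneg_right key (mul_nonneg (sq_nonneg s) (sq_nonneg t))
  nlinarith [sq_nonneg (θ * (1 - θ) * s ^ 2 - φ * (1 - φ) * t ^ 2)]

lemma LipTaylor.comp_continuousLinearMap {V : Type*} [NormedAddCommGroup V] [NormedSpace ℝ V]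
    [MeasurableSpace V] [BorelSpace V] {a b L L' : ℝ} {f : E → ℝ} (hf : LipTaylor (innerSL ℝ) a b L f)
    (A : V →L[ℝ] E) (hL : L ≤ L') (hA : L * ‖A‖ ^ 2 ≤ L') :
    LipTaylor ((ContinuousLinearMap.compL ℝ V E ℝ).flip A ∘L innerSL ℝ) a b L' (fun v ↦ f (A v)) := by
  obtain ⟨d, hd, hdL, hdf⟩ := hf.taylor
  refine ⟨hf.measurable.comp A.measurable, fun v ↦ hf.bounds _, fun v ↦ d (A v),
    hd.comp A.measurable, fun v ↦ (hdL _).trans hL, fun v h ↦ ?_⟩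
  have h0 : 0 ≤ L := (norm_nonneg _).trans (hdL 0)
  have := hdf (A v) (A h)
  rw [← map_add] at this
  refine this.trans ?_
  calc L * ‖A h‖ ^ 2 ≤ L * (‖A‖ * ‖h‖) ^ 2 := by gcongr; exact A.le_opNorm h
    _ = L * ‖A‖ ^ 2 * ‖h‖ ^ 2 := by ring
    _ ≤ L' * ‖h‖ ^ 2 := by gcongr

lemma LipTaylor.of_contDiff {a b : ℝ} {g : E → ℝ} (hg : ContDiff ℝ 2 g) (hc : HasCompactSupport g)
    (m : ℝ) (hb : ∀ x, a ≤ m + g x ∧ m + g x ≤ b) :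
    ∃ L, LipTaylor (innerSL ℝ) a b L (fun x ↦ m + g x) := by
  have hd : ContDiff ℝ 1 (fderiv ℝ g) := hg.fderiv_right (by norm_num)
  obtain ⟨C, hC⟩ := hd.continuous.bounded_above_of_compact_support (hc.fderiv ℝ)
  obtain ⟨K, hK⟩ := hd.lipschitzWith_of_hasCompactSupport (hc.fderiv ℝ) one_ne_zero
  refine ⟨max C K, measurable_const.add hg.continuous.measurable, hb,
    fun x ↦ (InnerProductSpace.toDual ℝ E).symm (fderiv ℝ g x),
    ((LinearIsometryEquiv.continuous _).comp hd.continuous).measurable, fun x ↦ ?_, fun x h ↦ ?_⟩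
  · rw [LinearIsometryEquiv.norm_map]
    exact (hC x).trans (le_max_left _ _)
  · have := (convex_closedBall x ‖h‖).norm_image_sub_le_of_norm_hasFDerivWithin_le'
      (f := g) (f' := fderiv ℝ g) (φ := fderiv ℝ g x) (C := K * ‖h‖) (x := x) (y := x + h)
      (fun y _ ↦ (hg.differentiable (by norm_num) y).hasFDerivAt.hasFDerivWithinAt)
      (fun y hy ↦ ?_) (by simp) (by simp)
    · rw [innerSL_apply_apply, InnerProductSpace.toDual_symm_apply]
      rw [add_sub_cancel_left, Real.norm_eq_abs] at this
      rw [add_sub_add_left_eq_sub]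
      calc _ ≤ _ := this
        _ = K * ‖h‖ ^ 2 := by ring
        _ ≤ _ := by gcongr; exact le_max_right _ _
    · refine (hK.norm_sub_le y x).trans ?_
      gcongr
      exact mem_closedBall_iff_norm.1 hy

/-- Gaussian hypercontractivity in bilinear form for smooth functions. -/
lemma LipTaylor.stdGaussian_rpow_mul_rpow_le {a b L L' ρ σ θ φ : ℝ} (hρσ : ρ ^ 2 + σ ^ 2 = 1)
    (hθ : 0 ≤ θ) (hθ' : θ ≤ 1) (hφ : 0 ≤ φ) (hφ' : φ ≤ 1)
    (hρ : θ * φ * ρ ^ 2 ≤ (1 - θ) * (1 - φ)) (ha : 0 < a) {f g : E → ℝ}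
    (hf : LipTaylor (innerSL ℝ) a b L f) (hg : LipTaylor (innerSL ℝ) a b L' g) :
    ∫ h : E × E, f (ρ • h.1 + σ • h.2) ^ θ * g h.1 ^ φ ∂((stdGaussian E).prod (stdGaussian E)) ≤
      (∫ x, f x ∂(stdGaussian E)) ^ θ * (∫ x, g x ∂(stdGaussian E)) ^ φ := by
  let A : E × E →L[ℝ] E := ρ • ContinuousLinearMap.fst ℝ E E + σ • ContinuousLinearMap.snd ℝ E E
  let B : E × E →L[ℝ] E := ContinuousLinearMap.fst ℝ E E
  let K := max (max L (L * ‖A‖ ^ 2)) (max L' (L' * ‖B‖ ^ 2))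
  have hF := hf.comp_continuousLinearMap (L' := K) A (by simp [K]) (by simp [K])
  have hG := hg.comp_continuousLinearMap (L' := K) B (by simp [K]) (by simp [K])
  have hΓ : ∀ l : StrongDual ℝ (E × E), ∫ h, l h ∂((stdGaussian E).prod (stdGaussian E)) = 0 := by
    intro l
    rw [integral_continuousLinearMap_prod IsGaussian.integrable_id IsGaussian.integrable_id,
      integral_strongDual_stdGaussian, integral_strongDual_stdGaussian, add_zero]
  have key := LipTaylor.integral_rpow_mul_rpow_le hΓ hθ hθ' hφ hφ' ha
    (fun e e' ↦ by exact mehler_covariance_le hρσ hθ hθ' hφ hφ' hρ e e') hF hG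
  have h1 : ∫ h : E × E, f (ρ • h.1 + σ • h.2) ∂((stdGaussian E).prod (stdGaussian E)) =
      ∫ x, f x ∂(stdGaussian E) := by
    conv_rhs => rw [← stdGaussian_prod_map_add (E := E) hρσ]
    rw [integral_map (by fun_prop) hf.measurable.aestronglyMeasurable]
  have h2 : ∫ h : E × E, g h.1 ∂((stdGaussian E).prod (stdGaussian E)) =
      ∫ x, g x ∂(stdGaussian E) := by
    rw [integral_fun_fst g]
    simp
  rw [← h1, ← h2]
  simpa [A, B] using key

end StdGaussian

section GaussianApproximation

open ProbabilityTheory Filter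
open scoped Topology ContDiff

variable {E : Type*} [NormedAddCommGroup E] [InnerProductSpace ℝ E] [FiniteDimensional ℝ E]
  [MeasurableSpace E] [BorelSpace E]

lemma exists_lipTaylor_seq_tendsto_ae (μ : Measure E) [IsFiniteMeasure μ] {a b : ℝ} {f : E → ℝ}
    (hf : Measurable f) (hb : ∀ x, a ≤ f x ∧ f x ≤ b) :
    ∃ F : ℕ → E → ℝ, (∀ k, ∃ L, LipTaylor (innerSL ℝ) a (b + 1) L (F k)) ∧
      ∀ᵐ x ∂μ, Tendsto (fun k ↦ F k x) atTop (𝓝 (f x)) := by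
  have hab : a ≤ b := (hb 0).1.trans (hb 0).2
  let m := (a + b + 1) / 2
  let R := (b + 1 - a) / 2
  have hR : 0 < R := by simp only [R]; linarith
  let h : E → ℝ := fun x ↦ arcsin ((f x - m) / R)
  have hhm : Measurable h := Real.measurable_arcsin.comp ((hf.sub_const m).div_const R)
  have hfh : ∀ x, f x = m + R * sin (h x) := by
    intro x
    have := hb x
    simp only [h]
    rw [Real.sin_arcsin]
    · field_simp
      ring
    · rw [le_div_iff₀ hR]; simp only [m, R]; linarith
    · rw [div_le_iff₀ hR]; simp only [m, R]; linarith
  have hhL : MemLp h 1 μ := by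
    refine MemLp.of_bound hhm.aestronglyMeasurable (π / 2) (.of_forall fun x ↦ ?_)
    exact abs_le.2 (Real.arcsin_mem_Icc _)
  choose g hgc hgs hgh using fun k : ℕ ↦ hhL.exist_eLpNorm_sub_le ENNReal.one_ne_top le_rfl
    (ε := 1 / ((k : ℝ) + 1)) (by positivity)
  have hlim : Tendsto (fun k ↦ eLpNorm (g k - h) 1 μ) atTop (𝓝 0) := by
    refine tendsto_of_tendsto_of_tendsto_of_le_of_le tendsto_const_nhds ?_ (fun _ ↦ zero_le)
      fun k ↦ (eLpNorm_sub_comm _ _ _ _).trans_le (hgh k)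
    simpa using ENNReal.tendsto_ofReal tendsto_one_div_add_atTop_nhds_zero_nat
  obtain ⟨ns, -, hns⟩ := (tendstoInMeasure_of_tendsto_eLpNorm one_ne_zero
    (fun k ↦ (hgs k).continuous.aestronglyMeasurable) hhm.aestronglyMeasurable
    hlim).exists_seq_tendsto_ae
  refine ⟨fun k x ↦ m + R * sin (g (ns k) x), fun k ↦ ?_, ?_⟩
  · refine LipTaylor.of_contDiff (g := fun x ↦ R * sin (g (ns k) x)) ?_ ?_ m fun x ↦ ?_
    · exact contDiff_const.mul (Real.contDiff_sin.comp ((hgs (ns k)).of_le (by norm_cast)))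
    · exact (hgc (ns k)).comp_left (g := fun t ↦ R * sin t) (by simp)
    · have h1 := Real.neg_one_le_sin (g (ns k) x)
      have h2 := Real.sin_le_one (g (ns k) x)
      constructor
      · have := mul_le_mul_of_nonneg_left h1 hR.le
        simp only [m, R] at this ⊢
        linarith
      · have := mul_le_mul_of_nonneg_left h2 hR.le
        simp only [m, R] at this ⊢
        linarith
  · filter_upwards [hns] with x hx
    rw [hfh x]
    exact ((Real.continuous_sin.tendsto _).comp hx |>.const_mul R).const_add m

variable {ρ σ θ φ : ℝ}

lemma stdGaussian_rpow_mul_rpow_le_of_bounds (hρσ : ρ ^ 2 + σ ^ 2 = 1)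
    (hθ : 0 ≤ θ) (hθ' : θ ≤ 1) (hφ : 0 ≤ φ) (hφ' : φ ≤ 1)
    (hρ : θ * φ * ρ ^ 2 ≤ (1 - θ) * (1 - φ)) {a b : ℝ} (ha : 0 < a) {f g : E → ℝ}
    (hf : Measurable f) (hfb : ∀ x, a ≤ f x ∧ f x ≤ b) (hg : Measurable g)
    (hgb : ∀ x, a ≤ g x ∧ g x ≤ b) :
    ∫ h : E × E, f (ρ • h.1 + σ • h.2) ^ θ * g h.1 ^ φ ∂((stdGaussian E).prod (stdGaussian E)) ≤
      (∫ x, f x ∂(stdGaussian E)) ^ θ * (∫ x, g x ∂(stdGaussian E)) ^ φ := by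
  obtain ⟨F, hF, hFf⟩ := exists_lipTaylor_seq_tendsto_ae (stdGaussian E) hf hfb
  obtain ⟨G, hG, hGg⟩ := exists_lipTaylor_seq_tendsto_ae (stdGaussian E) hg hgb
  choose LF hF using hF
  choose LG hG using hG
  have b0 : 0 ≤ b + 1 := by linarith [(hfb 0).1, (hfb 0).2]
  have lim : ∀ (f : E → ℝ) (F : ℕ → E → ℝ) (L : ℕ → ℝ),
      (∀ k, LipTaylor (innerSL ℝ) a (b + 1) (L k) (F k)) →
      (∀ᵐ x ∂(stdGaussian E), Tendsto (fun k ↦ F k x) atTop (𝓝 (f x))) →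
      Tendsto (fun k ↦ ∫ x, F k x ∂(stdGaussian E)) atTop (𝓝 (∫ x, f x ∂(stdGaussian E))) := by
    intro f F L hF hFf
    refine tendsto_integral_of_dominated_convergence (fun _ ↦ b + 1)
      (fun k ↦ (hF k).measurable.aestronglyMeasurable) (integrable_const _)
      (fun k ↦ .of_forall fun x ↦ ?_) hFf
    have := (hF k).bounds x
    rw [Real.norm_of_nonneg (ha.le.trans this.1)]
    exact this.2
  have h1 := lim f F LF hF hFf
  have h2 := lim g G LG hG hGg
  have hpf : 0 ≤ ∫ x, f x ∂(stdGaussian E) := integral_nonneg fun x ↦ ha.le.trans (hfb x).1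
  have hpg : 0 ≤ ∫ x, g x ∂(stdGaussian E) := integral_nonneg fun x ↦ ha.le.trans (hgb x).1
  have hFA : ∀ᵐ h : E × E ∂((stdGaussian E).prod (stdGaussian E)),
      Tendsto (fun k ↦ F k (ρ • h.1 + σ • h.2)) atTop (𝓝 (f (ρ • h.1 + σ • h.2))) := by
    rw [← stdGaussian_prod_map_add (E := E) hρσ] at hFf
    exact ae_of_ae_map (by fun_prop) hFf
  have hGB : ∀ᵐ h : E × E ∂((stdGaussian E).prod (stdGaussian E)),
      Tendsto (fun k ↦ G k h.1) atTop (𝓝 (g h.1)) :=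
    Measure.quasiMeasurePreserving_fst.ae hGg
  refine le_of_tendsto_of_tendsto' (tendsto_integral_of_dominated_convergence
    (F := fun k (h : E × E) ↦ F k (ρ • h.1 + σ • h.2) ^ θ * G k h.1 ^ φ)
    (fun _ ↦ (b + 1) ^ θ * (b + 1) ^ φ) (fun k ↦ ?_)
    (integrable_const _) (fun k ↦ .of_forall fun h ↦ ?_) ?_)
    ((h1.rpow_const (.inr hθ)).mul (h2.rpow_const (.inr hφ)))
    fun k ↦ (hF k).stdGaussian_rpow_mul_rpow_le hρσ hθ hθ' hφ hφ' hρ ha (hG k)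
  · have := (hF k).measurable
    have := (hG k).measurable
    exact Measurable.aestronglyMeasurable (by fun_prop)
  · have h1 := (hF k).bounds (ρ • h.1 + σ • h.2)
    have h2 := (hG k).bounds h.1
    have h3 := ha.le.trans h1.1
    have h4 := ha.le.trans h2.1
    rw [Real.norm_of_nonneg (by positivity)]
    gcongr
    exacts [h1.2, h2.2]
  · filter_upwards [hFA, hGB] with h hh hh'
    exact (hh.rpow_const (.inr hθ)).mul (hh'.rpow_const (.inr hφ))

/-- Gaussian hypercontractivity in bilinear form. -/
theorem stdGaussian_lintegral_rpow_mul_rpow_le (hρσ : ρ ^ 2 + σ ^ 2 = 1)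
    (hθ : 0 ≤ θ) (hθ' : θ ≤ 1) (hφ : 0 ≤ φ) (hφ' : φ ≤ 1)
    (hρ : θ * φ * ρ ^ 2 ≤ (1 - θ) * (1 - φ)) {f g : E → ℝ}
    (hf : Measurable f) (hf0 : ∀ x, 0 ≤ f x) (hfi : Integrable f (stdGaussian E))
    (hg : Measurable g) (hg0 : ∀ x, 0 ≤ g x) (hgi : Integrable g (stdGaussian E)) :
    ∫⁻ h : E × E, ENNReal.ofReal (f (ρ • h.1 + σ • h.2) ^ θ * g h.1 ^ φ)
        ∂((stdGaussian E).prod (stdGaussian E)) ≤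
      ENNReal.ofReal ((∫ x, f x ∂(stdGaussian E)) ^ θ * (∫ x, g x ∂(stdGaussian E)) ^ φ) := by
  let c : ℕ → ℝ → ℝ := fun k t ↦ min (max t (1 / ((k : ℝ) + 1))) (k + 1)
  have hcm : ∀ k, Measurable (c k) := fun k ↦ by fun_prop
  have hk1 : ∀ k : ℕ, 1 / ((k : ℝ) + 1) ≤ 1 := fun k ↦ by
    rw [div_le_one (by positivity)]; simp
  have hcb : ∀ (k : ℕ) t, 1 / ((k : ℝ) + 1) ≤ c k t ∧ c k t ≤ k + 1 := fun k t ↦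
    ⟨le_min (le_max_right _ _) ((hk1 k).trans (by simp)), min_le_right _ _⟩
  have hc0 : ∀ k t, 0 ≤ c k t := fun k t ↦ le_trans (by positivity) (hcb k t).1
  have hct : ∀ k t, 0 ≤ t → c k t ≤ t + 1 := fun k t ht ↦
    (min_le_left _ _).trans (max_le (by linarith) (by linarith [hk1 k]))
  have hclim : ∀ t, 0 ≤ t → Tendsto (fun k ↦ c k t) atTop (𝓝 t) := by
    intro t ht
    have h1 : Tendsto (fun k : ℕ ↦ max t (1 / ((k : ℝ) + 1))) atTop (𝓝 t) := by
      simpa [ht] using tendsto_const_nhds (x := t).max tendsto_one_div_add_atTop_nhds_zero_nat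
    refine h1.congr' ?_
    filter_upwards [eventually_ge_atTop ⌈t⌉₊] with k hk
    have : t ≤ k := (Nat.le_ceil t).trans (by exact_mod_cast hk)
    refine (min_eq_left (max_le (by linarith) ?_)).symm
    linarith [hk1 k, (Nat.cast_nonneg k : (0 : ℝ) ≤ k)]
  have lim : ∀ f : E → ℝ, Measurable f → (∀ x, 0 ≤ f x) → Integrable f (stdGaussian E) →
      Tendsto (fun k ↦ ∫ x, c k (f x) ∂(stdGaussian E)) atTop
        (𝓝 (∫ x, f x ∂(stdGaussian E))) := by
    intro f hf hf0 hfi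
    refine tendsto_integral_of_dominated_convergence (fun x ↦ f x + 1)
      (fun k ↦ ((hcm k).comp hf).aestronglyMeasurable) (hfi.add (integrable_const _))
      (fun k ↦ .of_forall fun x ↦ ?_) (.of_forall fun x ↦ hclim _ (hf0 x))
    rw [Real.norm_of_nonneg (hc0 _ _)]
    exact hct k _ (hf0 x)
  have hR : Tendsto (fun k ↦ ENNReal.ofReal ((∫ x, c k (f x) ∂(stdGaussian E)) ^ θ *
      (∫ x, c k (g x) ∂(stdGaussian E)) ^ φ)) atTop (𝓝 _) := ENNReal.tendsto_ofReal
    (((lim f hf hf0 hfi).rpow_const (.inr hθ)).mul ((lim g hg hg0 hgi).rpow_const (.inr hφ)))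
  have hm : ∀ k, Measurable fun h : E × E ↦ c k (f (ρ • h.1 + σ • h.2)) ^ θ * c k (g h.1) ^ φ :=
    fun k ↦ by have := hcm k; fun_prop
  have hle : ∀ k, ∫⁻ h : E × E, ENNReal.ofReal (c k (f (ρ • h.1 + σ • h.2)) ^ θ * c k (g h.1) ^ φ)
      ∂((stdGaussian E).prod (stdGaussian E)) ≤ ENNReal.ofReal
        ((∫ x, c k (f x) ∂(stdGaussian E)) ^ θ * (∫ x, c k (g x) ∂(stdGaussian E)) ^ φ) := by
    intro k
    have hpos : ∀ h : E × E, 0 ≤ c k (f (ρ • h.1 + σ • h.2)) ^ θ * c k (g h.1) ^ φ := fun h ↦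
      mul_nonneg (rpow_nonneg (hc0 _ _) _) (rpow_nonneg (hc0 _ _) _)
    rw [← ofReal_integral_eq_lintegral_ofReal _ (.of_forall hpos)]
    · exact ENNReal.ofReal_le_ofReal (stdGaussian_rpow_mul_rpow_le_of_bounds hρσ hθ hθ' hφ hφ' hρ
        (by positivity : 0 < 1 / ((k : ℝ) + 1)) ((hcm k).comp hf) (fun x ↦ hcb k _)
        ((hcm k).comp hg) fun x ↦ hcb k _)
    · refine integrable_of_bounds (b := ((k : ℝ) + 1) ^ θ * (k + 1) ^ φ) (hm k) fun h ↦ ⟨hpos h, ?_⟩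
      exact mul_le_mul (rpow_le_rpow (hc0 _ _) (hcb k _).2 hθ) (rpow_le_rpow (hc0 _ _) (hcb k _).2 hφ)
        (rpow_nonneg (hc0 _ _) _) (by positivity)
  calc _ = ∫⁻ h : E × E, liminf (fun k ↦ ENNReal.ofReal
        (c k (f (ρ • h.1 + σ • h.2)) ^ θ * c k (g h.1) ^ φ)) atTop
        ∂((stdGaussian E).prod (stdGaussian E)) := by
        refine lintegral_congr fun h ↦ (Tendsto.liminf_eq (ENNReal.tendsto_ofReal ?_)).symm
        exact ((hclim _ (hf0 _)).rpow_const (.inr hθ)).mul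
          ((hclim _ (hg0 _)).rpow_const (.inr hφ))
    _ ≤ _ := lintegral_liminf_le fun k ↦ (hm k).ennreal_ofReal
    _ ≤ _ := liminf_le_liminf (.of_forall hle)
    _ = _ := hR.liminf_eq

end GaussianApproximation

section HeatKernel

open ProbabilityTheory
open scoped RealInnerProductSpace

variable {n : ℕ}

/-- The Euclidean heat kernel at time `t`. -/
noncomputable def heatKernel (n : ℕ) (t : ℝ) (x : EuclideanSpace ℝ (Fin n)) : ℝ :=
  (4 * π * t) ^ (-(n : ℝ) / 2) * Real.exp (-‖x‖ ^ 2 / (4 * t))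

lemma heatKernel_pos {t : ℝ} (ht : 0 < t) (x : EuclideanSpace ℝ (Fin n)) :
    0 < heatKernel n t x := by
  unfold heatKernel
  positivity

@[fun_prop]
lemma continuous_heatKernel (t : ℝ) : Continuous (heatKernel n t) := by
  unfold heatKernel
  fun_prop

lemma integral_heatKernel {t : ℝ} (ht : 0 < t) : ∫ x, heatKernel n t x = 1 := by
  have h := GaussianFourier.integral_rexp_neg_mul_sq_norm (V := EuclideanSpace ℝ (Fin n))
    (b := 1 / (4 * t)) (by positivity)
  have e : ∀ x : EuclideanSpace ℝ (Fin n), heatKernel n t x =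
      (4 * π * t) ^ (-(n : ℝ) / 2) * Real.exp (-(1 / (4 * t)) * ‖x‖ ^ 2) := fun x ↦ by
    unfold heatKernel
    ring_nf
  simp_rw [e]
  rw [integral_const_mul, h, finrank_euclideanSpace_fin,
    show π / (1 / (4 * t)) = 4 * π * t by field_simp, ← rpow_add (by positivity),
    neg_div, neg_add_cancel, rpow_zero]

lemma integrable_heatKernel {t : ℝ} (ht : 0 < t) : Integrable (heatKernel n t) :=
  .of_integral_ne_zero (by rw [integral_heatKernel ht]; exact one_ne_zero)

lemma map_smul_stdGaussian {c t : ℝ} (ht : 0 < t) (hc : c ^ 2 = 2 * t) :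
    (stdGaussian (EuclideanSpace ℝ (Fin n))).map (c • ·) =
      volume.withDensity fun x ↦ ENNReal.ofReal (heatKernel n t x) := by
  have hfin : IsFiniteMeasure (volume.withDensity fun x ↦ ENNReal.ofReal (heatKernel n t x)) :=
    isFiniteMeasure_withDensity_ofReal (integrable_heatKernel ht).2
  have hprob : IsProbabilityMeasure
      ((stdGaussian (EuclideanSpace ℝ (Fin n))).map (c • ·)) :=
    Measure.isProbabilityMeasure_map (by fun_prop)
  refine Measure.ext_of_charFun (funext fun s ↦ ?_)
  rw [charFun_map_smul, charFun_stdGaussian, charFun_apply,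
    integral_withDensity_eq_integral_toReal_smul (by fun_prop) (by simp)]
  have e : ∀ x : EuclideanSpace ℝ (Fin n), (ENNReal.ofReal (heatKernel n t x)).toReal •
      Complex.exp (⟪x, s⟫ * Complex.I) = (((4 * π * t) ^ (-(n : ℝ) / 2) : ℝ) : ℂ) *
        Complex.exp (-(1 / (4 * t) : ℂ) * ‖x‖ ^ 2 + Complex.I * ⟪s, x⟫) := fun x ↦ by
    rw [ENNReal.toReal_ofReal (heatKernel_pos ht x).le, heatKernel, Complex.real_smul,
      Complex.ofReal_mul, Complex.ofReal_exp, mul_assoc, ← Complex.exp_add, real_inner_comm]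
    push_cast
    ring_nf
  simp_rw [e]
  rw [integral_const_mul, GaussianFourier.integral_cexp_neg_mul_sq_norm_add
    (by norm_cast; simpa using ht)]
  have h1 : (π / (1 / (4 * t)) : ℂ) ^ (Module.finrank ℝ (EuclideanSpace ℝ (Fin n)) / 2 : ℂ) =
      (((4 * π * t) ^ ((n : ℝ) / 2) : ℝ) : ℂ) := by
    rw [Complex.ofReal_cpow (by positivity), finrank_euclideanSpace_fin]
    push_cast
    congr 1
    have : (t : ℂ) ≠ 0 := by exact_mod_cast ht.ne'
    field_simp
  rw [h1, ← mul_assoc, ← Complex.ofReal_mul, ← rpow_add (by positivity),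
    show -(n : ℝ) / 2 + n / 2 = 0 by ring, rpow_zero, Complex.ofReal_one, one_mul, Complex.I_sq]
  congr 1
  rw [norm_smul, ← Complex.ofReal_pow, mul_pow, Real.norm_eq_abs, sq_abs, hc]
  push_cast
  have : (t : ℂ) ≠ 0 := by exact_mod_cast ht.ne'
  field_simp

lemma lintegral_smul_stdGaussian {c t : ℝ} (ht : 0 < t) (hc : c ^ 2 = 2 * t)
    {g : EuclideanSpace ℝ (Fin n) → ENNReal} (hg : Measurable g) :
    ∫⁻ h, g (c • h) ∂(stdGaussian (EuclideanSpace ℝ (Fin n))) =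
      ∫⁻ x, ENNReal.ofReal (heatKernel n t x) * g x := by
  rw [← lintegral_map (f := g) (g := (c • ·)) hg (by fun_prop), map_smul_stdGaussian ht hc,
    lintegral_withDensity_eq_lintegral_mul _ (by fun_prop) hg]
  rfl

lemma integral_smul_stdGaussian {c t : ℝ} (ht : 0 < t) (hc : c ^ 2 = 2 * t)
    {g : EuclideanSpace ℝ (Fin n) → ℝ} (hg : Measurable g) :
    ∫ h, g (c • h) ∂(stdGaussian (EuclideanSpace ℝ (Fin n))) =
      ∫ x, heatKernel n t x * g x := by
  rw [← integral_map (f := g) (φ := (c • ·)) (by fun_prop) hg.aestronglyMeasurable,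
    map_smul_stdGaussian ht hc,
    integral_withDensity_eq_integral_toReal_smul (by fun_prop) (by simp)]
  simp_rw [ENNReal.toReal_ofReal (heatKernel_pos ht _).le, smul_eq_mul]

lemma integrable_smul_stdGaussian {c t : ℝ} (ht : 0 < t) (hc : c ^ 2 = 2 * t)
    {g : EuclideanSpace ℝ (Fin n) → ℝ} (hg : Measurable g)
    (hi : Integrable fun x ↦ heatKernel n t x * g x) :
    Integrable (fun h ↦ g (c • h)) (stdGaussian (EuclideanSpace ℝ (Fin n))) := by
  change Integrable (g ∘ (c • ·)) _
  rw [← integrable_map_measure hg.aestronglyMeasurable (by fun_prop), map_smul_stdGaussian ht hc,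
    integrable_withDensity_iff_integrable_smul' (by fun_prop) (by simp)]
  simpa only [ENNReal.toReal_ofReal (heatKernel_pos ht _).le, smul_eq_mul] using hi

/-- Gaussian hypercontractivity in bilinear form, in terms of heat kernels. -/
lemma lintegral_heatKernel_rpow_mul_rpow_le {τ₁ τ₂ s κ θ φ : ℝ} (hτ₁ : 0 < τ₁) (hτ₂ : 0 < τ₂)
    (hs : 0 < s) (hκ : κ ^ 2 * τ₂ + s = τ₁)
    (hθ : 0 ≤ θ) (hθ' : θ ≤ 1) (hφ : 0 ≤ φ) (hφ' : φ ≤ 1)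
    (hρ : θ * φ * (κ ^ 2 * τ₂) ≤ (1 - θ) * (1 - φ) * τ₁) {F G : EuclideanSpace ℝ (Fin n) → ℝ}
    (hF : Measurable F) (hF0 : ∀ x, 0 ≤ F x) (hFi : Integrable fun x ↦ heatKernel n τ₁ x * F x)
    (hG : Measurable G) (hG0 : ∀ x, 0 ≤ G x) (hGi : Integrable fun x ↦ heatKernel n τ₂ x * G x) :
    ∫⁻ y, ∫⁻ x, ENNReal.ofReal (F x ^ θ * G y ^ φ * heatKernel n τ₂ y * heatKernel n s (x - κ • y)) ≤
      ENNReal.ofReal ((∫ x, heatKernel n τ₁ x * F x) ^ θ * (∫ x, heatKernel n τ₂ x * G x) ^ φ) := by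
  let c₁ := √(2 * τ₁)
  let c₂ := √(2 * τ₂)
  have hc₁ : c₁ ^ 2 = 2 * τ₁ := Real.sq_sqrt (by positivity)
  have hc₂ : c₂ ^ 2 = 2 * τ₂ := Real.sq_sqrt (by positivity)
  have hc₁0 : 0 < c₁ := by positivity
  let ρ := κ * c₂ / c₁
  let σ := √(2 * s) / c₁
  have hρ2 : ρ ^ 2 = κ ^ 2 * τ₂ / τ₁ := by
    simp only [ρ]
    rw [div_pow, mul_pow, hc₁, hc₂]
    field_simp
  have hσc : (c₁ * σ) ^ 2 = 2 * s := by
    simp only [σ]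
    rw [mul_div_cancel₀ _ hc₁0.ne', Real.sq_sqrt (by positivity)]
  have hσ2 : σ ^ 2 = s / τ₁ := by
    rw [mul_pow, hc₁] at hσc
    field_simp
    linarith
  have hρc : c₁ * ρ = κ * c₂ := mul_div_cancel₀ _ hc₁0.ne'
  have key := stdGaussian_lintegral_rpow_mul_rpow_le
    (E := EuclideanSpace ℝ (Fin n)) (ρ := ρ) (σ := σ)
    (by rw [hρ2, hσ2, ← add_div, hκ, div_self hτ₁.ne']) hθ hθ' hφ hφ'
    (by rw [hρ2, ← mul_div_assoc, div_le_iff₀ hτ₁]; exact hρ)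
    (f := fun h ↦ F (c₁ • h)) (g := fun h ↦ G (c₂ • h)) (by fun_prop) (fun _ ↦ hF0 _)
    (integrable_smul_stdGaussian hτ₁ hc₁ hF hFi) (by fun_prop) (fun _ ↦ hG0 _)
    (integrable_smul_stdGaussian hτ₂ hc₂ hG hGi)
  rw [integral_smul_stdGaussian hτ₁ hc₁ hF, integral_smul_stdGaussian hτ₂ hc₂ hG,
    lintegral_prod _ (by fun_prop)] at key
  refine le_trans (le_of_eq ?_) key
  have inner : ∀ y, ∫⁻ h, ENNReal.ofReal (F (c₁ • (ρ • y + σ • h)) ^ θ * G (c₂ • y) ^ φ)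
      ∂(stdGaussian (EuclideanSpace ℝ (Fin n))) =
      ∫⁻ x, ENNReal.ofReal (F x ^ θ * G (c₂ • y) ^ φ * heatKernel n s (x - κ • c₂ • y)) := by
    intro y
    have e : ∀ h, c₁ • (ρ • y + σ • h) = κ • c₂ • y + (c₁ * σ) • h := fun h ↦ by
      rw [smul_add, smul_smul, smul_smul, smul_smul, hρc]
    simp_rw [e]
    rw [lintegral_smul_stdGaussian hs hσc
      (g := fun x ↦ ENNReal.ofReal (F (κ • c₂ • y + x) ^ θ * G (c₂ • y) ^ φ)) (by fun_prop),
      ← lintegral_add_left_eq_self (fun x ↦ ENNReal.ofReal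
        (F x ^ θ * G (c₂ • y) ^ φ * heatKernel n s (x - κ • c₂ • y))) (κ • c₂ • y)]
    refine lintegral_congr fun x ↦ ?_
    rw [← ENNReal.ofReal_mul (heatKernel_pos hs _).le, add_sub_cancel_left, mul_comm]
  simp_rw [inner]
  rw [lintegral_smul_stdGaussian hτ₂ hc₂ (g := fun y ↦ ∫⁻ x, ENNReal.ofReal
    (F x ^ θ * G y ^ φ * heatKernel n s (x - κ • y)))]
  · refine lintegral_congr fun y ↦ ?_
    rw [← lintegral_const_mul _ (by fun_prop)]
    refine lintegral_congr fun x ↦ ?_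
    rw [← ENNReal.ofReal_mul (heatKernel_pos hτ₂ _).le]
    ring_nf
  · refine Measurable.lintegral_prod_right' (f := fun p : _ × _ ↦ ENNReal.ofReal
      (F p.2 ^ θ * G p.1 ^ φ * heatKernel n s (p.2 - κ • p.1))) ?_
    fun_prop

end HeatKernel

section Heat

variable {n : ℕ}

lemma heat_eq_integral_heatKernel_sub {t : ℝ} (ht : 0 < t) (f : EuclideanSpace ℝ (Fin n) → ℝ) (x : EuclideanSpace ℝ (Fin n)) :
    heat n t f x = ∫ y, heatKernel n t (y - x) * f y := by
  rw [heat, if_neg ht.ne', ← integral_const_mul]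
  refine integral_congr_ae (.of_forall fun y ↦ ?_)
  simp only [heatKernel, norm_sub_rev x y]
  ring

lemma heat_eq_integral_heatKernel {t : ℝ} (ht : 0 < t) (f : EuclideanSpace ℝ (Fin n) → ℝ) (x : EuclideanSpace ℝ (Fin n)) :
    heat n t f x = ∫ y, heatKernel n t y * f (x + y) := by
  rw [heat_eq_integral_heatKernel_sub ht,
    ← integral_add_left_eq_self (fun y ↦ heatKernel n t (y - x) * f y) x]
  simp only [add_sub_cancel_left]

lemma integrable_heatKernel_mul {t : ℝ} (ht : 0 < t) {a b : ℝ} {f : EuclideanSpace ℝ (Fin n) → ℝ} (hf : Measurable f)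
    (hb : ∀ x, a ≤ f x ∧ f x ≤ b) : Integrable fun x ↦ heatKernel n t x * f x :=
  (integrable_heatKernel ht).mul_bdd (c := max |a| |b|) hf.aestronglyMeasurable
    (.of_forall fun x ↦ abs_le_max_abs_abs (hb x).1 (hb x).2)

lemma heat_mem_bounds {t : ℝ} (ht : 0 < t) {a b : ℝ} {f : EuclideanSpace ℝ (Fin n) → ℝ} (hf : Measurable f)
    (hb : ∀ x, a ≤ f x ∧ f x ≤ b) (x : EuclideanSpace ℝ (Fin n)) : a ≤ heat n t f x ∧ heat n t f x ≤ b := by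
  have hi := integrable_heatKernel_mul ht (hf.comp (measurable_const_add x)) fun y ↦ hb (x + y)
  have hc : ∀ c : ℝ, ∫ y, heatKernel n t y * c = c := fun c ↦ by
    rw [integral_mul_const, integral_heatKernel ht, one_mul]
  rw [heat_eq_integral_heatKernel ht]
  constructor
  · rw [← hc a]
    exact integral_mono ((integrable_heatKernel ht).mul_const a) hi fun y ↦
      mul_le_mul_of_nonneg_left (hb _).1 (heatKernel_pos ht y).le
  · rw [← hc b]
    exact integral_mono hi ((integrable_heatKernel ht).mul_const b) fun y ↦
      mul_le_mul_of_nonneg_left (hb _).2 (heatKernel_pos ht y).le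

lemma measurable_heat {t : ℝ} (ht : 0 < t) {f : EuclideanSpace ℝ (Fin n) → ℝ} (hf : Measurable f) :
    Measurable (heat n t f) := by
  have : StronglyMeasurable fun p : EuclideanSpace ℝ (Fin n) × EuclideanSpace ℝ (Fin n) ↦ heatKernel n t p.2 * f (p.1 + p.2) :=
    Measurable.stronglyMeasurable (by fun_prop)
  rw [funext (heat_eq_integral_heatKernel ht f)]
  exact this.integral_prod_right.measurable

lemma heatKernel_eq_exp {t : ℝ} (ht : 0 < t) (x : EuclideanSpace ℝ (Fin n)) :
    heatKernel n t x = exp (-(n / 2) * (log (4 * π) + log t) - ‖x‖ ^ 2 / (4 * t)) := by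
  rw [heatKernel, rpow_def_of_pos (by positivity), ← exp_add, log_mul (by positivity) ht.ne']
  ring_nf

lemma log_mul_mul_div_mul {a b c d e : ℝ} (ha : 0 < a) (hb : 0 < b) (hc : 0 < c) (hd : 0 < d) (he : 0 < e) :
    log (a * b * c / (d * e)) = log a + log b + log c - log d - log e := by
  rw [log_div (by positivity) (by positivity), log_mul (by positivity) hc.ne',
    log_mul ha.ne' hb.ne', log_mul hd.ne' he.ne']
  ring

lemma heatKernel_ratio_identity {p q u v r : ℝ} (hp : 1 < p) (hpq : p < q) (hu : 0 < u) (hv : 0 < v)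
    (hr : r = u * p - v * q) (hr0 : 0 < r) (x y : EuclideanSpace ℝ (Fin n)) :
    (heatKernel n u x / heatKernel n (u * (p - 1) * r / (v * (q - p))) x) ^ (1 / p) *
      (heatKernel n v y / heatKernel n (v * (q - 1) * r / (u * (q - p))) y) ^ (1 - 1 / q) *
      heatKernel n (v * (q - 1) * r / (u * (q - p))) y *
      heatKernel n (u * (p - 1) * r / (v * (q - 1))) (x - ((p - 1) * u / ((q - 1) * v)) • y) =
    ((((p - 1) / v) ^ (1 - 1 / p) * ((q - 1) / u) ^ (1 / q - 1) *
      (r / (q - p)) ^ (1 / q - 1 / p)) ^ ((n : ℝ) / 2))⁻¹ *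
      (heatKernel n v y * heatKernel n r (x - y)) := by
  have hp1 : 0 < p - 1 := by linarith
  have hq1 : 0 < q - 1 := by linarith
  have hd : 0 < q - p := by linarith
  have hp0 : 0 < p := by linarith
  have hq0 : 0 < q := by linarith
  set τ := u * (p - 1) * r / (v * (q - p)) with hτ
  set τ' := v * (q - 1) * r / (u * (q - p)) with hτ'
  set s := u * (p - 1) * r / (v * (q - 1)) with hs
  set κ := (p - 1) * u / ((q - 1) * v) with hκ
  have hτ0 : 0 < τ := by positivity
  have hτ'0 : 0 < τ' := by positivity
  have hs0 : 0 < s := by positivity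
  have hlτ : log τ = log u + log (p - 1) + log r - log v - log (q - p) :=
    log_mul_mul_div_mul hu hp1 hr0 hv hd
  have hlτ' : log τ' = log v + log (q - 1) + log r - log u - log (q - p) :=
    log_mul_mul_div_mul hv hq1 hr0 hu hd
  have hls : log s = log u + log (p - 1) + log r - log v - log (q - 1) :=
    log_mul_mul_div_mul hu hp1 hr0 hv hq1
  have hM : ((((p - 1) / v) ^ (1 - 1 / p) * ((q - 1) / u) ^ (1 / q - 1) *
      (r / (q - p)) ^ (1 / q - 1 / p)) ^ ((n : ℝ) / 2))⁻¹ =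
      exp (-((n / 2) * ((1 - 1 / p) * (log (p - 1) - log v) + (1 / q - 1) * (log (q - 1) - log u) +
        (1 / q - 1 / p) * (log r - log (q - p))))) := by
    rw [rpow_def_of_pos (x := (p - 1) / v) (by positivity),
      rpow_def_of_pos (x := (q - 1) / u) (by positivity),
      rpow_def_of_pos (x := r / (q - p)) (by positivity), ← exp_add, ← exp_add, ← exp_mul,
      ← exp_neg, log_div hp1.ne' hv.ne', log_div hq1.ne' hu.ne', log_div hr0.ne' hd.ne']
    ring_nf
  have hx : 1 / p / u - 1 / p / τ + 1 / s = 1 / r := by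
    simp only [hτ, hs]
    field_simp
    rw [hr]
    ring
  have hxy : κ / s = 1 / r := by
    simp only [hκ, hs]
    field_simp
  have hy : (1 - 1 / q) / v - (1 - 1 / q) / τ' + 1 / τ' + κ ^ 2 / s = 1 / v + 1 / r := by
    simp only [hτ', hκ, hs]
    field_simp
    rw [hr]
    ring
  have e1 : ‖x - κ • y‖ ^ 2 = ‖x‖ ^ 2 - 2 * κ * inner ℝ x y + κ ^ 2 * ‖y‖ ^ 2 := by
    rw [norm_sub_sq_real, inner_smul_right, norm_smul, mul_pow, Real.norm_eq_abs, sq_abs]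
    ring
  have e2 : ‖x - y‖ ^ 2 = ‖x‖ ^ 2 - 2 * inner ℝ x y + ‖y‖ ^ 2 := norm_sub_sq_real x y
  clear_value τ τ' s κ
  rw [hM, heatKernel_eq_exp hu, heatKernel_eq_exp hv, heatKernel_eq_exp hτ0, heatKernel_eq_exp hτ'0,
    heatKernel_eq_exp hs0, heatKernel_eq_exp hr0, ← exp_sub, ← exp_sub, ← exp_mul, ← exp_mul,
    ← exp_add, ← exp_add, ← exp_add, ← exp_add, ← exp_add, hlτ, hlτ', hls, e1, e2]
  congr 1
  linear_combination (-(‖x‖ ^ 2) / 4) * hx + (inner ℝ x y / 2) * hxy - (‖y‖ ^ 2 / 4) * hy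

end Heat

theorem dimensional_local_hypercontractivity_heat (n : ℕ) (hn : 1 ≤ n)
    (q₁ q₂ : ℝ) (hq₁ : 1 < q₁) (hq : q₁ < q₂)
    (u₁ u₂ : ℝ) (hu₁ : 0 < u₁) (hu₂ : 0 < u₂)
    (hr : 0 < u₁ * q₁ - u₂ * q₂)
    (f : EuclideanSpace ℝ (Fin n) → ℝ) (hf : Measurable f)
    (a b : ℝ) (ha : 0 < a) (hab : ∀ x, a ≤ f x ∧ f x ≤ b)
    (x : EuclideanSpace ℝ (Fin n)) :
    (heat n u₂ (fun y => heat n (u₁ * q₁ - u₂ * q₂) f y ^ q₂) x) ^ (1 / q₂) ≤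
      (heat n u₁ (fun y => f y ^ q₁) x) ^ (1 / q₁) *
        (((q₁ - 1) / u₂) ^ (1 - 1 / q₁) * ((q₂ - 1) / u₁) ^ (1 / q₂ - 1) *
          ((u₁ * q₁ - u₂ * q₂) / (q₂ - q₁)) ^ (1 / q₂ - 1 / q₁)) ^ ((n : ℝ) / 2) := by
  set r := u₁ * q₁ - u₂ * q₂ with hrdef
  have hp1 : 0 < q₁ - 1 := by linarith
  have hq1 : 0 < q₂ - 1 := by linarith
  have hd : 0 < q₂ - q₁ := by linarith
  have hp0 : 0 < q₁ := by linarith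
  have hq0 : 0 < q₂ := by linarith
  set M := ((q₁ - 1) / u₂) ^ (1 - 1 / q₁) * ((q₂ - 1) / u₁) ^ (1 / q₂ - 1) *
    (r / (q₂ - q₁)) ^ (1 / q₂ - 1 / q₁) with hM
  have hM0 : 0 < M ^ ((n : ℝ) / 2) := by positivity
  set w := heat n r f with hw
  have hwm : Measurable w := measurable_heat hr hf
  have hwb : ∀ y, a ≤ w y ∧ w y ≤ b := heat_mem_bounds hr hf hab
  have hf0 : ∀ y, 0 < f y := fun y ↦ ha.trans_le (hab y).1
  have hw0 : ∀ y, 0 < w y := fun y ↦ ha.trans_le (hwb y).1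
  have powBounds : ∀ {g : EuclideanSpace ℝ (Fin n) → ℝ} {t : ℝ}, 0 < t →
      (∀ y, a ≤ g y ∧ g y ≤ b) → ∀ y, a ^ t ≤ g y ^ t ∧ g y ^ t ≤ b ^ t := fun ht hg y ↦
    ⟨rpow_le_rpow ha.le (hg y).1 ht.le, rpow_le_rpow (ha.le.trans (hg y).1) (hg y).2 ht.le⟩
  set N := heat n u₁ (fun y ↦ f y ^ q₁) x with hN
  set Λ := heat n u₂ (fun y ↦ w y ^ q₂) x with hΛ
  have hN0 : 0 < N := (rpow_pos_of_pos ha _).trans_le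
    (heat_mem_bounds hu₁ (hf.pow_const q₁) (powBounds hp0 hab) x).1
  have hΛ0 : 0 < Λ := (rpow_pos_of_pos ha _).trans_le
    (heat_mem_bounds hu₂ (hwm.pow_const q₂) (powBounds hq0 hwb) x).1
  set τ₁ := u₁ * (q₁ - 1) * r / (u₂ * (q₂ - q₁)) with hτ₁
  set τ₂ := u₂ * (q₂ - 1) * r / (u₁ * (q₂ - q₁)) with hτ₂
  set s := u₁ * (q₁ - 1) * r / (u₂ * (q₂ - 1)) with hs
  set κ := (q₁ - 1) * u₁ / ((q₂ - 1) * u₂) with hκ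
  have hτ₁0 : 0 < τ₁ := by positivity
  have hτ₂0 : 0 < τ₂ := by positivity
  have hs0 : 0 < s := by positivity
  have hκτ : κ ^ 2 * τ₂ + s = τ₁ := by
    simp only [hκ, hτ₂, hs, hτ₁]
    field_simp
    ring
  have hρ : 1 / q₁ * (1 - 1 / q₂) * (κ ^ 2 * τ₂) ≤ (1 - 1 / q₁) * (1 - (1 - 1 / q₂)) * τ₁ := by
    refine le_of_eq ?_
    simp only [hκ, hτ₂, hτ₁]
    field_simp
    ring
  let R : ℝ → ℝ → EuclideanSpace ℝ (Fin n) → ℝ := fun u τ y ↦ heatKernel n u y / heatKernel n τ y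
  have hR0 : ∀ {u τ : ℝ}, 0 < u → 0 < τ → ∀ y, 0 < R u τ y := fun hu hτ y ↦
    div_pos (heatKernel_pos hu y) (heatKernel_pos hτ y)
  have hRm : ∀ u τ, Measurable (R u τ) := fun u τ ↦
    (continuous_heatKernel u).measurable.div (continuous_heatKernel τ).measurable
  have hKR : ∀ {u τ : ℝ}, 0 < τ → ∀ (g : EuclideanSpace ℝ (Fin n) → ℝ) (y),
      heatKernel n τ y * (g y * R u τ y) = heatKernel n u y * g y := fun hτ g y ↦ by
    have := (heatKernel_pos hτ y).ne'
    simp only [R]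
    field_simp
  have key := lintegral_heatKernel_rpow_mul_rpow_le (n := n) hτ₁0 hτ₂0 hs0 hκτ (θ := 1 / q₁)
    (φ := 1 - 1 / q₂) (by positivity) (by rw [div_le_one hp0]; exact hq₁.le)
    (by rw [sub_nonneg, div_le_one hq0]; linarith) (by linarith [one_div_pos.2 hq0]) hρ
    (F := fun y ↦ f (x + y) ^ q₁ * R u₁ τ₁ y) (G := fun y ↦ w (x + y) ^ q₂ * R u₂ τ₂ y)
    (by have := hRm u₁ τ₁; fun_prop)
    (fun y ↦ mul_nonneg (rpow_nonneg (hf0 _).le _) (hR0 hu₁ hτ₁0 y).le)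
    (by
      simp_rw [hKR hτ₁0 (fun y ↦ f (x + y) ^ q₁)]
      exact integrable_heatKernel_mul hu₁ (by fun_prop) fun y ↦ powBounds hp0 hab (x + y))
    (by have := hRm u₂ τ₂; fun_prop)
    (fun y ↦ mul_nonneg (rpow_nonneg (hw0 _).le _) (hR0 hu₂ hτ₂0 y).le)
    (by
      simp_rw [hKR hτ₂0 (fun y ↦ w (x + y) ^ q₂)]
      exact integrable_heatKernel_mul hu₂ (by fun_prop) fun y ↦ powBounds hq0 hwb (x + y))
  simp_rw [hKR hτ₁0 (fun y ↦ f (x + y) ^ q₁), hKR hτ₂0 (fun y ↦ w (x + y) ^ q₂)] at key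
  rw [← heat_eq_integral_heatKernel hu₁ (fun y ↦ f y ^ q₁) x,
    ← heat_eq_integral_heatKernel hu₂ (fun y ↦ w y ^ q₂) x, ← hN, ← hΛ] at key
  have integrand : ∀ y z, (f (x + z) ^ q₁ * R u₁ τ₁ z) ^ (1 / q₁) *
      (w (x + y) ^ q₂ * R u₂ τ₂ y) ^ (1 - 1 / q₂) * heatKernel n τ₂ y * heatKernel n s (z - κ • y) =
      (M ^ ((n : ℝ) / 2))⁻¹ * (heatKernel n u₂ y * w (x + y) ^ (q₂ - 1)) *
        (heatKernel n r (z - y) * f (x + z)) := by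
    intro y z
    have id := heatKernel_ratio_identity hq₁ hq hu₁ hu₂ hrdef hr z y
    rw [mul_rpow (rpow_nonneg (hf0 _).le _) (hR0 hu₁ hτ₁0 z).le,
      mul_rpow (rpow_nonneg (hw0 _).le _) (hR0 hu₂ hτ₂0 y).le, ← rpow_mul (hf0 _).le,
      ← rpow_mul (hw0 _).le, mul_one_div_cancel hp0.ne', rpow_one,
      show q₂ * (1 - 1 / q₂) = q₂ - 1 by field_simp]
    linear_combination (f (x + z) * w (x + y) ^ (q₂ - 1)) * id
  have inner : ∀ y, ∫⁻ z, ENNReal.ofReal ((M ^ ((n : ℝ) / 2))⁻¹ *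
      (heatKernel n u₂ y * w (x + y) ^ (q₂ - 1)) * (heatKernel n r (z - y) * f (x + z))) =
      ENNReal.ofReal ((M ^ ((n : ℝ) / 2))⁻¹ * (heatKernel n u₂ y * w (x + y) ^ q₂)) := by
    intro y
    have hi : Integrable fun z ↦ heatKernel n r (z - y) * f (x + z) := by
      have := integrable_heatKernel_mul hr (hf.comp (measurable_const_add (x + y)))
        fun z ↦ hab (x + y + z)
      refine (this.comp_sub_right y).congr (.of_forall fun z ↦ ?_)
      simp only [Function.comp_apply]
      rw [show x + y + (z - y) = x + z by abel]
    have hwy : w (x + y) = ∫ z, heatKernel n r (z - y) * f (x + z) := by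
      rw [hw, heat_eq_integral_heatKernel_sub hr,
        ← integral_add_left_eq_self (fun z ↦ heatKernel n r (z - (x + y)) * f z) x]
      simp only [add_sub_add_left_eq_sub]
    rw [← ofReal_integral_eq_lintegral_ofReal (hi.const_mul _) (.of_forall fun z ↦ ?_),
      integral_const_mul, ← hwy, mul_assoc, mul_assoc, ← rpow_add_one (hw0 _).ne', sub_add_cancel]
    have h1 := heatKernel_pos hr (z - y)
    have h2 := heatKernel_pos hu₂ y
    have h3 := hf0 (x + z)
    have h4 := hw0 (x + y)
    simp only [Pi.zero_apply]
    positivity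
  simp_rw [integrand, inner] at key
  rw [← ofReal_integral_eq_lintegral_ofReal ((integrable_heatKernel_mul hu₂ (by fun_prop)
      fun y ↦ powBounds hq0 hwb (x + y)).const_mul _) (.of_forall fun y ↦ ?_), integral_const_mul,
    ← heat_eq_integral_heatKernel hu₂ (fun y ↦ w y ^ q₂) x, ← hΛ,
    ENNReal.ofReal_le_ofReal_iff (by positivity), inv_mul_le_iff₀ hM0] at key
  · have hsplit : Λ = Λ ^ (1 / q₂) * Λ ^ (1 - 1 / q₂) := by
      rw [← rpow_add hΛ0, add_sub_cancel, rpow_one]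
    refine le_of_mul_le_mul_right (a := Λ ^ (1 - 1 / q₂)) ?_ (by positivity)
    rw [← hsplit]
    linarith
  · have h2 := heatKernel_pos hu₂ y
    have h4 := hw0 (x + y)
    simp only [Pi.zero_apply]
    positivity
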